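/- arXiv:math/0412463 — 5 statements merged into one kernel-verified Lean document; each statement's English description precedes it below -/
import Mathlib

section
/- The third cumulant of η = Φ(h + σz) is nonnegative: E[η³] - 3E[η²]E[η] + 2(E[η])³ ≥ 0. -/
open MeasureTheory ProbabilityTheory Real

lemma aux_moment {Ω : Type*} [MeasurableSpace Ω] (μ : Measure Ω) [IsProbabilityMeasure μ]
    (Y Z : Ω → ℝ) (hY : Measurable Y) (hZ : Measurable Z) (hY0 : ∀ x, 0 ≤ Y x) (hZ0 : ∀ x, 0 ≤ Z x)
    (iY : Integrable Y μ) (iZ : Integrable Z μ) (iY3 : Integrable (fun x => Y x ^ 3) μ)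
    (iZ3 : Integrable (fun x => Z x ^ 3) μ) (hE : ∫ x, Y x ∂μ = ∫ x, Z x ∂μ)
    (t0 : ℝ) (h1 : ∀ t, 0 < t → t < t0 → μ {x | t < Y x} ≤ μ {x | t < Z x})
    (h2 : ∀ t, 0 < t → t0 < t → μ {x | t < Z x} ≤ μ {x | t < Y x}) (ht0 : 0 ≤ t0) :
    ∫ x, Z x ^ 3 ∂μ ≤ ∫ x, Y x ^ 3 ∂μ := by
  set g1 : ℝ → ℝ := fun t => max (3 * (t0 ^ 2 - t ^ 2)) 0 with hg1
  set g2 : ℝ → ℝ := fun t => max (3 * (t ^ 2 - t0 ^ 2)) 0 with hg2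
  have c1 : Continuous g1 := by fun_prop
  have c2 : Continuous g2 := by fun_prop
  set G1 : ℝ → ℝ := fun y => ∫ t in (0:ℝ)..y, g1 t with hG1
  set G2 : ℝ → ℝ := fun y => ∫ t in (0:ℝ)..y, g2 t with hG2
  have cG1 : Continuous G1 :=
    intervalIntegral.continuous_primitive (fun a b => c1.intervalIntegrable a b) 0
  have cG2 : Continuous G2 :=
    intervalIntegral.continuous_primitive (fun a b => c2.intervalIntegrable a b) 0
  have n1 : ∀ y, 0 ≤ y → 0 ≤ G1 y := fun y hy =>
    intervalIntegral.integral_nonneg hy (fun t _ => le_max_right _ _)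
  have n2 : ∀ y, 0 ≤ y → 0 ≤ G2 y := fun y hy =>
    intervalIntegral.integral_nonneg hy (fun t _ => le_max_right _ _)
  have hdiff : ∀ y, G2 y - G1 y = y ^ 3 - 3 * t0 ^ 2 * y := by
    intro y
    rw [hG1, hG2]
    simp only
    rw [← intervalIntegral.integral_sub (c2.intervalIntegrable _ _) (c1.intervalIntegrable _ _)]
    have : ∀ t, g2 t - g1 t = 3 * t ^ 2 - 3 * t0 ^ 2 := by
      intro t
      simp only [hg1, hg2]
      rcases le_total (t ^ 2) (t0 ^ 2) with h | h
      · rw [max_eq_right (by linarith), max_eq_left (by linarith)]; ring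
      · rw [max_eq_left (by linarith), max_eq_right (by linarith)]; ring
    simp_rw [this]
    rw [intervalIntegral.integral_sub ((by fun_prop : Continuous fun t : ℝ => 3 * t ^ 2).intervalIntegrable _ _)
      (by simp)]
    simp
    ring
  have b1 : ∀ y, 0 ≤ y → G1 y ≤ 3 * t0 ^ 2 * y := by
    intro y hy
    have := intervalIntegral.integral_mono_on (μ := volume) hy (c1.intervalIntegrable 0 y)
      ((continuous_const : Continuous fun _ : ℝ => 3 * t0 ^ 2).intervalIntegrable 0 y)
      (fun t _ => max_le (by nlinarith [sq_nonneg t]) (by positivity))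
    simp at this
    simp only [hG1]; linarith
  have iG1 : ∀ W : Ω → ℝ, Measurable W → (∀ x, 0 ≤ W x) → Integrable W μ →
      Integrable (fun x => G1 (W x)) μ := by
    intro W hW hW0 iW
    refine (iW.const_mul (3 * t0 ^ 2)).mono' (cG1.measurable.comp hW).aestronglyMeasurable ?_
    filter_upwards with x
    rw [Real.norm_of_nonneg (n1 _ (hW0 x))]
    exact b1 _ (hW0 x)
  have iG2 : ∀ W : Ω → ℝ, Measurable W → (∀ x, 0 ≤ W x) → Integrable W μ →
      Integrable (fun x => W x ^ 3) μ → Integrable (fun x => G2 (W x)) μ := by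
    intro W hW hW0 iW iW3
    have : (fun x => G2 (W x)) = fun x => (W x ^ 3 - 3 * t0 ^ 2 * W x) + G1 (W x) := by
      funext x; linarith [hdiff (W x)]
    rw [this]
    exact (iW3.sub (iW.const_mul _)).add (iG1 W hW hW0 iW)
  have key : ∀ W : Ω → ℝ, Measurable W → (∀ x, 0 ≤ W x) → Integrable W μ →
      Integrable (fun x => W x ^ 3) μ →
      ∫ x, G2 (W x) ∂μ - ∫ x, G1 (W x) ∂μ = ∫ x, W x ^ 3 ∂μ - 3 * t0 ^ 2 * ∫ x, W x ∂μ := by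
    intro W hW hW0 iW iW3
    rw [← integral_sub (iG2 W hW hW0 iW iW3) (iG1 W hW hW0 iW)]
    simp_rw [hdiff]
    rw [integral_sub iW3 (iW.const_mul _), integral_const_mul]
  have L1 : ∀ W : Ω → ℝ, Measurable W → (∀ x, 0 ≤ W x) →
      ∫⁻ x, ENNReal.ofReal (G1 (W x)) ∂μ
        = ∫⁻ t in Set.Ioi 0, μ {a | t < W a} * ENNReal.ofReal (g1 t) := fun W hW hW0 =>
    lintegral_comp_eq_lintegral_meas_lt_mul μ (Filter.Eventually.of_forall hW0) hW.aemeasurable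
      (fun t _ => c1.intervalIntegrable _ _) (Filter.Eventually.of_forall fun t => le_max_right _ _)
  have L2 : ∀ W : Ω → ℝ, Measurable W → (∀ x, 0 ≤ W x) →
      ∫⁻ x, ENNReal.ofReal (G2 (W x)) ∂μ
        = ∫⁻ t in Set.Ioi 0, μ {a | t < W a} * ENNReal.ofReal (g2 t) := fun W hW hW0 =>
    lintegral_comp_eq_lintegral_meas_lt_mul μ (Filter.Eventually.of_forall hW0) hW.aemeasurable
      (fun t _ => c2.intervalIntegrable _ _) (Filter.Eventually.of_forall fun t => le_max_right _ _)
  have I1 : ∫ x, G1 (Y x) ∂μ ≤ ∫ x, G1 (Z x) ∂μ := by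
    rw [← ENNReal.ofReal_le_ofReal_iff (integral_nonneg fun x => n1 _ (hZ0 x)),
      ofReal_integral_eq_lintegral_ofReal (iG1 Y hY hY0 iY) (Filter.Eventually.of_forall fun x => n1 _ (hY0 x)),
      ofReal_integral_eq_lintegral_ofReal (iG1 Z hZ hZ0 iZ) (Filter.Eventually.of_forall fun x => n1 _ (hZ0 x)),
      L1 Y hY hY0, L1 Z hZ hZ0]
    refine setLIntegral_mono' measurableSet_Ioi fun t ht => ?_
    rcases lt_or_ge t t0 with h | h
    · exact mul_le_mul_left (h1 t ht h) _
    · have : g1 t = 0 := max_eq_right (by have : (0:ℝ) < t := ht; nlinarith)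
      simp [this]
  have I2 : ∫ x, G2 (Z x) ∂μ ≤ ∫ x, G2 (Y x) ∂μ := by
    rw [← ENNReal.ofReal_le_ofReal_iff (integral_nonneg fun x => n2 _ (hY0 x)),
      ofReal_integral_eq_lintegral_ofReal (iG2 Y hY hY0 iY iY3) (Filter.Eventually.of_forall fun x => n2 _ (hY0 x)),
      ofReal_integral_eq_lintegral_ofReal (iG2 Z hZ hZ0 iZ iZ3) (Filter.Eventually.of_forall fun x => n2 _ (hZ0 x)),
      L2 Y hY hY0, L2 Z hZ hZ0]
    refine setLIntegral_mono' measurableSet_Ioi fun t ht => ?_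
    rcases lt_or_ge t0 t with h | h
    · exact mul_le_mul_left (h2 t ht h) _
    · have : g2 t = 0 := max_eq_right (by have : (0:ℝ) < t := ht; nlinarith)
      simp [this]
  have k1 := key Y hY hY0 iY iY3
  have k2 := key Z hZ hZ0 iZ iZ3
  rw [hE] at k1
  linarith

lemma aux_refl (h c : ℝ) (v : NNReal) (hv : v ≠ 0) (s : Set ℝ) (hs : MeasurableSet s)
    (H : ∀ y ∈ s, |c - y - h| ≤ |y - h|) :
    gaussianReal h v s ≤ gaussianReal h v ((fun y => c - y) ⁻¹' s) := by
  have hm : MeasurableSet ((fun y : ℝ => c - y) ⁻¹' s) := hs.preimage (by fun_prop)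
  rw [gaussianReal_apply h hv, gaussianReal_apply h hv]
  have mp : MeasurePreserving (fun y : ℝ => c - y) volume volume :=
    Measure.measurePreserving_sub_left volume c
  have e := mp.setLIntegral_comp_preimage hs (f := fun y => gaussianPDF h v (c - y))
    ((measurable_gaussianPDF h v).comp (by fun_prop))
  simp only [sub_sub_cancel] at e
  rw [e]
  refine setLIntegral_mono' hs fun y hy => ?_
  unfold gaussianPDF gaussianPDFReal
  have := sq_le_sq.2 (H y hy)
  gcongr

lemma aux_s1 (b b' : ℝ) (hb : 0 < b) (x : ℝ) (hx : b < |x|) :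
    x ∈ {x | b' < |x|} ∪ (Set.Ioc b b' ∪ Set.Ico (-b') (-b)) := by
  by_cases h1 : b' < |x|
  · exact Or.inl h1
  · right
    push Not at h1
    rcases abs_cases x with ⟨e, _⟩ | ⟨e, _⟩
    · left; constructor <;> linarith
    · right; constructor <;> linarith

lemma aux_s2 (a' a : ℝ) (ha' : 0 < a') (haa : a' < a) (x : ℝ)
    (hx : x ∈ {x | |x| < a'} ∪ (Set.Ico a' a ∪ Set.Ioc (-a) (-a'))) : |x| < a := by
  rcases hx with hx | hx | hx
  · exact lt_trans hx haa
  · rw [abs_lt]; constructor <;> linarith [hx.1, hx.2]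
  · rw [abs_lt]; constructor <;> linarith [hx.1, hx.2]

lemma aux_s3 (a' a : ℝ) (x : ℝ)
    (hx : x ∈ {x : ℝ | |x| < a'}) : x ∉ (Set.Ico a' a ∪ Set.Ioc (-a) (-a')) := by
  have h0 : |x| < a' := hx
  have h1 := abs_lt.1 h0
  rintro (h | h)
  · linarith [h.1]
  · linarith [h.2]

lemma aux_core (Φ : ℝ → ℝ) (hc : Continuous Φ) (hconv : ConvexOn ℝ Set.univ Φ)
    (hsymm : ∀ x, Φ (-x) = Φ x) (h0 : Φ 0 = 0) (h : ℝ) (hh : 0 ≤ h) (v : NNReal) (hv : v ≠ 0)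
    (m t t' : ℝ) (ht : 0 < t) (htt : t < t')
    (hlt : gaussianReal h v {x | Φ x < m - t} < gaussianReal h v {x | m + t < Φ x}) :
    gaussianReal h v {x | Φ x < m - t'} ≤ gaussianReal h v {x | m + t' < Φ x} := by
  have hnn : ∀ x, 0 ≤ Φ x := by
    intro x
    have := hconv.2 (Set.mem_univ x) (Set.mem_univ (-x)) (by norm_num : (0:ℝ) ≤ 1/2)
      (by norm_num : (0:ℝ) ≤ 1/2) (by norm_num)
    simp only [smul_eq_mul, hsymm] at this
    rw [show 1 / 2 * x + 1 / 2 * -x = 0 by ring, h0] at this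
    linarith
  rcases le_or_gt m t' with hm | hm
  · have : {x | Φ x < m - t'} = ∅ := by
      ext x; simp; linarith [hnn x]
    simp [this]
  have habs : ∀ x, Φ |x| = Φ x := by
    intro x; rcases abs_choice x with e | e <;> rw [e]; exact hsymm x
  have hray : ∀ x y, 0 ≤ x → x ≤ y → 0 < y → Φ x ≤ x / y * Φ y := by
    intro x y hx hxy hy
    have := hconv.2 (Set.mem_univ 0) (Set.mem_univ y)
      (by have := (div_le_one hy).2 hxy; linarith : 0 ≤ 1 - x / y) (by positivity : 0 ≤ x / y) (by ring)
    simp only [smul_eq_mul, h0, mul_zero, zero_add] at this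
    rwa [div_mul_cancel₀ x hy.ne'] at this
  have hmono : ∀ x y, 0 ≤ x → x < y → 0 < Φ y → Φ x < Φ y := by
    intro x y hx hxy hp
    have hy : 0 < y := hx.trans_lt hxy
    refine (hray x y hx hxy.le hy).trans_lt ?_
    have := (div_lt_one hy).2 hxy
    nlinarith
  -- some point of positive value
  have hpos : ∃ x0, 0 < x0 ∧ 0 < Φ x0 := by
    by_contra hcon
    push Not at hcon
    have hz : {x | m + t < Φ x} = ∅ := by
      ext x
      simp only [Set.mem_ofPred_eq, Set.mem_empty_iff_false, iff_false, not_lt]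
      rw [← habs x]
      rcases (abs_nonneg x).eq_or_lt with e | e
      · rw [← e, h0]; linarith
      · linarith [hcon _ e]
    rw [hz] at hlt
    simp at hlt
  obtain ⟨x0, hx0, hp0⟩ := hpos
  have hinv : ∀ l, 0 < l → ∃ a, 0 < a ∧ Φ a = l := by
    intro l hl
    set y := max x0 (x0 * (l / Φ x0)) with hy
    have hy1 : x0 ≤ y := le_max_left _ _
    have hy0 : 0 < y := hx0.trans_le hy1
    have hly : l ≤ Φ y := by
      have r := hray x0 y hx0.le hy1 hy0
      have hy2 : x0 * (l / Φ x0) ≤ y := le_max_right _ _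
      rw [← mul_div_assoc, div_le_iff₀ hp0] at hy2
      rw [div_mul_eq_mul_div, le_div_iff₀ hy0] at r
      have : x0 * l ≤ x0 * Φ y := by linarith
      exact le_of_mul_le_mul_left this hx0
    obtain ⟨a, ha, hal⟩ := intermediate_value_Icc hy0.le hc.continuousOn
      (show l ∈ Set.Icc (Φ 0) (Φ y) from ⟨by rw [h0]; exact hl.le, hly⟩)
    refine ⟨a, lt_of_le_of_ne ha.1 ?_, hal⟩
    rintro rfl
    linarith
  obtain ⟨a', ha'0, ha'⟩ := hinv (m - t') (by linarith)
  obtain ⟨a, ha0, ha⟩ := hinv (m - t) (by linarith)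
  obtain ⟨b, hb0, hb⟩ := hinv (m + t) (by linarith)
  obtain ⟨b', hb'0, hb'⟩ := hinv (m + t') (by linarith)
  have hlt_iff : ∀ c, 0 < c → 0 < Φ c → ∀ x, (Φ x < Φ c ↔ |x| < c) := by
    intro c hc0 hc1 x
    rw [← habs x]
    constructor
    · intro hx
      by_contra hcon
      push Not at hcon
      rcases hcon.eq_or_lt with e | e
      · rw [← e] at hx; exact lt_irrefl _ hx
      · by_cases hp : 0 < Φ |x|
        · linarith [hmono c |x| hc0.le e hp]
        · have := hray c |x| hc0.le hcon (hc0.trans e)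
          have h3 : Φ |x| = 0 := le_antisymm (not_lt.1 hp) (hnn _)
          rw [h3] at this; linarith
    · intro hx; exact hmono _ _ (abs_nonneg x) hx hc1
  have hgt_iff : ∀ c, 0 < c → 0 < Φ c → ∀ x, (Φ c < Φ x ↔ c < |x|) := by
    intro c hc0 hc1 x
    rw [← habs x]
    constructor
    · intro hx
      by_contra hcon
      push Not at hcon
      rcases hcon.eq_or_lt with e | e
      · rw [e] at hx; exact lt_irrefl _ hx
      · linarith [hmono |x| c (abs_nonneg x) e hc1]
    · intro hx
      have h1 : Φ c < Φ |x| ∨ ¬ (Φ c < Φ |x|) := em _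
      rcases h1 with h1 | h1
      · exact h1
      · exfalso
        rcases (not_lt.1 h1).eq_or_lt with e | e
        · exact absurd (hmono c |x| hc0.le hx (by rw [e]; exact hc1)) h1
        · rw [habs, hlt_iff c hc0 hc1] at e; linarith
  have hab : ∀ c d, 0 < c → 0 < d → 0 < Φ c → Φ c < Φ d → c < d := by
    intro c d hc0 hd0 hc1 hcd
    have := (hgt_iff c hc0 hc1 d).1 hcd
    rwa [abs_of_pos hd0] at this
  have haa : a' < a := hab _ _ ha'0 ha0 (by linarith) (by linarith)
  have hab1 : a < b := hab _ _ ha0 hb0 (by linarith) (by linarith)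
  have hbb : b < b' := hab _ _ hb0 hb'0 (by linarith) (by linarith)
  have hlen : b' - b ≤ a - a' := by
    have s1 := hconv.slope_mono_adjacent (Set.mem_univ a') (Set.mem_univ b) haa hab1
    have s2 := hconv.slope_mono_adjacent (Set.mem_univ a) (Set.mem_univ b') hab1 hbb
    have s3 := s1.trans s2
    rw [ha, ha', hb, hb', div_le_div_iff₀ (by linarith) (by linarith)] at s3
    have h3 : (t' - t) * (b' - b) ≤ (t' - t) * (a - a') := by nlinarith
    exact le_of_mul_le_mul_left h3 (by linarith)
  have e1 : {x | Φ x < m - t'} = {x | |x| < a'} := by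
    ext x; simp only [Set.mem_ofPred_eq]; rw [← ha']; exact hlt_iff a' ha'0 (by linarith) x
  have e2 : {x | Φ x < m - t} = {x | |x| < a} := by
    ext x; simp only [Set.mem_ofPred_eq]; rw [← ha]; exact hlt_iff a ha0 (by linarith) x
  have e3 : {x | m + t < Φ x} = {x | b < |x|} := by
    ext x; simp only [Set.mem_ofPred_eq]; rw [← hb]; exact hgt_iff b hb0 (by linarith) x
  have e4 : {x | m + t' < Φ x} = {x | b' < |x|} := by
    ext x; simp only [Set.mem_ofPred_eq]; rw [← hb']; exact hgt_iff b' hb'0 (by linarith) x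
  rw [e2, e3] at hlt
  rw [e1, e4]
  set μ := gaussianReal h v with hμ
  rcases lt_or_ge (a' + b') (2 * h) with hC | hC
  · refine (aux_refl h (2 * h) v hv {x | |x| < a'} (measurableSet_lt (by fun_prop) (by fun_prop)) ?_).trans ?_
    · intro y _
      rw [show 2 * h - y - h = -(y - h) by ring, abs_neg]
    · refine measure_mono fun y hy => ?_
      simp only [Set.mem_preimage, Set.mem_ofPred_eq, abs_lt] at hy ⊢
      exact lt_of_lt_of_le (by linarith [hy.2]) (le_abs_self y)
  · have p1 : μ (Set.Ioc b b') ≤ μ (Set.Ico a' a) := by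
      refine (aux_refl h (a' + b') v hv _ measurableSet_Ioc ?_).trans (measure_mono ?_)
      · intro y hy
        rw [abs_of_nonneg (by linarith [hy.1] : 0 ≤ y - h), abs_le]
        constructor <;> linarith [hy.1, hy.2]
      · intro y hy
        simp only [Set.mem_preimage, Set.mem_Ioc] at hy
        exact ⟨by linarith, by linarith⟩
    have p2 : μ (Set.Ico (-b') (-b)) ≤ μ (Set.Ioc (-a) (-a')) := by
      refine (aux_refl h (-(a' + b')) v hv _ measurableSet_Ico ?_).trans (measure_mono ?_)
      · intro y hy
        rw [abs_of_nonpos (by linarith [hy.2] : y - h ≤ 0), abs_le]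
        constructor <;> linarith [hy.1, hy.2]
      · intro y hy
        simp only [Set.mem_preimage, Set.mem_Ico] at hy
        exact ⟨by linarith, by linarith⟩
    have q1 : μ {x | b < |x|} ≤ μ {x | b' < |x|} + (μ (Set.Ioc b b') + μ (Set.Ico (-b') (-b))) := by
      refine (measure_mono ?_).trans ((measure_union_le _ _).trans
        (add_le_add le_rfl (measure_union_le _ _)))
      exact fun x hx => aux_s1 b b' hb0 x hx
    have q2 : μ {x | |x| < a'} + (μ (Set.Ico a' a) + μ (Set.Ioc (-a) (-a'))) ≤ μ {x | |x| < a} := by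
      rw [← measure_union _ measurableSet_Ioc, ← measure_union _ (measurableSet_Ico.union measurableSet_Ioc)]
      · exact measure_mono fun x hx => aux_s2 a' a ha'0 haa x hx
      · rw [Set.disjoint_left]
        exact fun x hx => aux_s3 a' a x hx
      · rw [Set.disjoint_left]
        intro x hx hx'
        linarith [hx.1, hx'.2]
    set P := μ (Set.Ioc b b') + μ (Set.Ico (-b') (-b)) with hP
    have q3 : μ {x | |x| < a'} + P ≤ μ {x | b' < |x|} + P :=
      ((add_le_add le_rfl (add_le_add p1 p2)).trans q2).trans (hlt.le.trans q1)
    have hPt : P ≠ ⊤ := by simp [hP]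
    exact (ENNReal.add_le_add_iff_right hPt).1 q3

lemma aux_main (Φ : ℝ → ℝ) (hc : Continuous Φ) (hconv : ConvexOn ℝ Set.univ Φ)
    (hsymm : ∀ x, Φ (-x) = Φ x) (h0 : Φ 0 = 0) (h : ℝ) (hh : 0 ≤ h) (v : NNReal) (hv : v ≠ 0)
    (hint : ∀ p : ℕ, Integrable (fun x => Φ x ^ p) (gaussianReal h v)) :
    0 ≤ (∫ x, Φ x ^ 3 ∂(gaussianReal h v))
      - 3 * (∫ x, Φ x ^ 2 ∂(gaussianReal h v)) * (∫ x, Φ x ∂(gaussianReal h v))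
      + 2 * (∫ x, Φ x ∂(gaussianReal h v)) ^ 3 := by
  set μ := gaussianReal h v with hμ
  set m := ∫ x, Φ x ∂μ with hm
  have i1 : Integrable Φ μ := by simpa using hint 1
  have i2 := hint 2
  have i3 := hint 3
  have hnn : ∀ x, 0 ≤ Φ x := by
    intro x
    have := hconv.2 (Set.mem_univ x) (Set.mem_univ (-x)) (by norm_num : (0:ℝ) ≤ 1/2)
      (by norm_num : (0:ℝ) ≤ 1/2) (by norm_num)
    simp only [smul_eq_mul, hsymm] at this
    rw [show 1 / 2 * x + 1 / 2 * -x = 0 by ring, h0] at this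
    linarith
  have hm0 : 0 ≤ m := integral_nonneg hnn
  set g : ℝ → ℝ := fun x => Φ x - m with hg
  have cg : Continuous g := by fun_prop
  have ig : Integrable g μ := i1.sub (integrable_const m)
  have Eg : ∫ x, g x ∂μ = 0 := by
    simp only [hg]; rw [integral_sub i1 (integrable_const m)]; simp [hm]
  have hg3 : (fun x => g x ^ 3) = fun x => ((Φ x ^ 3 - 3 * m * Φ x ^ 2) + 3 * m ^ 2 * Φ x) - m ^ 3 := by
    funext x; simp only [hg]; ring
  have ig3 : Integrable (fun x => g x ^ 3) μ := by
    rw [hg3]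
    exact ((i3.sub (i2.const_mul _)).add (i1.const_mul _)).sub (integrable_const _)
  have Eg3 : ∫ x, g x ^ 3 ∂μ = (∫ x, Φ x ^ 3 ∂μ) - 3 * (∫ x, Φ x ^ 2 ∂μ) * m + 2 * m ^ 3 := by
    have j1 : Integrable (fun x => Φ x ^ 3 - 3 * m * Φ x ^ 2) μ := i3.sub (i2.const_mul _)
    have j2 : Integrable (fun x => (Φ x ^ 3 - 3 * m * Φ x ^ 2) + 3 * m ^ 2 * Φ x) μ :=
      j1.add (i1.const_mul _)
    rw [hg3, integral_sub j2 (integrable_const _), integral_add j1 (i1.const_mul _),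
      integral_sub i3 (i2.const_mul _), integral_const_mul, integral_const_mul, ← hm]
    simp
    ring
  rw [← Eg3]
  set Y : ℝ → ℝ := fun x => max (g x) 0 with hY
  set Z : ℝ → ℝ := fun x => max (-g x) 0 with hZ
  have mY : Measurable Y := (by fun_prop : Continuous Y).measurable
  have mZ : Measurable Z := (by fun_prop : Continuous Z).measurable
  have Y0 : ∀ x, 0 ≤ Y x := fun x => le_max_right _ _
  have Z0 : ∀ x, 0 ≤ Z x := fun x => le_max_right _ _
  have iY : Integrable Y μ := ig.pos_part
  have iZ : Integrable Z μ := ig.neg_part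
  have hYb : ∀ x, Y x ^ 3 ≤ |g x ^ 3| := by
    intro x; rw [abs_pow]
    exact pow_le_pow_left₀ (Y0 x) (max_le (le_abs_self _) (abs_nonneg _)) 3
  have hZb : ∀ x, Z x ^ 3 ≤ |g x ^ 3| := by
    intro x; rw [abs_pow]
    exact pow_le_pow_left₀ (Z0 x) (max_le (neg_le_abs _) (abs_nonneg _)) 3
  have iY3 : Integrable (fun x => Y x ^ 3) μ := by
    refine ig3.abs.mono' (mY.pow_const 3).aestronglyMeasurable (Filter.Eventually.of_forall fun x => ?_)
    rw [Real.norm_of_nonneg (pow_nonneg (Y0 x) 3)]; exact hYb x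
  have iZ3 : Integrable (fun x => Z x ^ 3) μ := by
    refine ig3.abs.mono' (mZ.pow_const 3).aestronglyMeasurable (Filter.Eventually.of_forall fun x => ?_)
    rw [Real.norm_of_nonneg (pow_nonneg (Z0 x) 3)]; exact hZb x
  have hYZ : ∀ x, Y x - Z x = g x := by
    intro x; simp only [hY, hZ]
    rcases le_total (g x) 0 with e | e
    · rw [max_eq_right e, max_eq_left (by linarith)]; ring
    · rw [max_eq_left e, max_eq_right (by linarith)]; ring
  have hYZ3 : ∀ x, Y x ^ 3 - Z x ^ 3 = g x ^ 3 := by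
    intro x; simp only [hY, hZ]
    rcases le_total (g x) 0 with e | e
    · rw [max_eq_right e, max_eq_left (by linarith)]; ring
    · rw [max_eq_left e, max_eq_right (by linarith)]; ring
  have hE : ∫ x, Y x ∂μ = ∫ x, Z x ∂μ := by
    have := integral_sub iY iZ
    simp_rw [hYZ] at this
    linarith
  have hE3 : ∫ x, g x ^ 3 ∂μ = ∫ x, Y x ^ 3 ∂μ - ∫ x, Z x ^ 3 ∂μ := by
    rw [← integral_sub iY3 iZ3]; simp_rw [hYZ3]
  have sY : ∀ t, 0 < t → {x | t < Y x} = {x | m + t < Φ x} := by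
    intro t ht; ext x
    simp only [hY, hg, Set.mem_ofPred_eq, lt_max_iff]
    constructor
    · rintro (h | h) <;> linarith
    · intro h; left; linarith
  have sZ : ∀ t, 0 < t → {x | t < Z x} = {x | Φ x < m - t} := by
    intro t ht; ext x
    simp only [hZ, hg, Set.mem_ofPred_eq, lt_max_iff]
    constructor
    · rintro (h | h) <;> linarith
    · intro h; left; linarith
  set T : Set ℝ := {t | 0 < t ∧ (μ {x | Φ x < m - t} < μ {x | m + t < Φ x} ∨ m ≤ t)} with hT
  have Tne : T.Nonempty := ⟨m + 1, by linarith, Or.inr (by linarith)⟩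
  have Tbd : BddBelow T := ⟨0, fun t ht => ht.1.le⟩
  have := aux_moment μ Y Z mY mZ Y0 Z0 iY iZ iY3 iZ3 hE (sInf T) ?_ ?_
    (Real.sInf_nonneg fun t ht => ht.1.le)
  · rw [hE3]; linarith
  · intro t ht htT
    rw [sY t ht, sZ t ht]
    by_contra hcon
    exact notMem_of_lt_csInf htT Tbd ⟨ht, Or.inl (not_le.1 hcon)⟩
  · intro t ht htT
    rw [sY t ht, sZ t ht]
    obtain ⟨s, ⟨hs0, hs⟩, hst⟩ := exists_lt_of_csInf_lt Tne htT
    rcases hs with hs | hs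
    · exact aux_core Φ hc hconv hsymm h0 h hh v hv m s t hs0 hst hs
    · have : {x | Φ x < m - t} = ∅ := by
        ext x; simp; linarith [hnn x]
      simp [this]

/-- The third cumulant of `η = Φ (h + σ z)` is nonnegative. -/
theorem third_cumulant_nonneg
    (Φ : ℝ → ℝ) (hΦsmooth : ContDiff ℝ (⊤ : ℕ∞) Φ)
    (hΦconv : ConvexOn ℝ Set.univ Φ)
    (hΦsymm : ∀ x, Φ (-x) = Φ x) (hΦ0 : Φ 0 = 0)
    (h σ : ℝ) (hσ : 0 < σ)
    (hint : ∀ p : ℕ, Integrable (fun z => (Φ (h + σ * z)) ^ p) (gaussianReal 0 1)) :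
    (∫ z, (Φ (h + σ * z)) ^ 3 ∂(gaussianReal 0 1))
      - 3 * (∫ z, (Φ (h + σ * z)) ^ 2 ∂(gaussianReal 0 1))
          * (∫ z, Φ (h + σ * z) ∂(gaussianReal 0 1))
      + 2 * (∫ z, Φ (h + σ * z) ∂(gaussianReal 0 1)) ^ 3 ≥ 0 := by
  have hc := hΦsmooth.continuous
  obtain ⟨τ, hτ0, hτ⟩ : ∃ τ : ℝ, τ ≠ 0 ∧ ∀ z, Φ (h + σ * z) = Φ (|h| + τ * z) := by
    rcases abs_choice h with e | e
    · exact ⟨σ, hσ.ne', fun z => by rw [e]⟩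
    · refine ⟨-σ, by linarith [hσ] |> fun (h : -σ < 0) => h.ne, fun z => ?_⟩
      rw [e, ← hΦsymm]; congr 1; ring
  simp_rw [hτ] at hint ⊢
  set v : NNReal := ⟨τ ^ 2, sq_nonneg τ⟩ with hv
  have hv0 : v ≠ 0 := by
    intro e
    have : (v : ℝ) = 0 := by rw [e]; rfl
    have h2 : τ ^ 2 = 0 := this
    exact hτ0 (by simpa using h2)
  have hmap : (gaussianReal 0 1).map (fun z => |h| + τ * z) = gaussianReal |h| v := by
    have : (fun z => |h| + τ * z) = (fun z => |h| + z) ∘ (fun z => τ * z) := rfl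
    rw [this, ← Measure.map_map (by fun_prop) (by fun_prop), gaussianReal_map_const_mul,
      gaussianReal_map_const_add]
    simp [hv]
    rfl
  have mm : Measurable (fun z : ℝ => |h| + τ * z) := by fun_prop
  have hI : ∀ p : ℕ, ∫ x, Φ x ^ p ∂(gaussianReal |h| v) = ∫ z, Φ (|h| + τ * z) ^ p ∂(gaussianReal 0 1) := by
    intro p
    rw [← hmap, integral_map mm.aemeasurable (by fun_prop)]
  have hI1 : ∫ x, Φ x ∂(gaussianReal |h| v) = ∫ z, Φ (|h| + τ * z) ∂(gaussianReal 0 1) := by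
    simpa using hI 1
  have := aux_main Φ hc hΦconv hΦsymm hΦ0 |h| (abs_nonneg h) v hv0 (fun p => by
    rw [← hmap, integrable_map_measure (by fun_prop) mm.aemeasurable]
    exact hint p)
  rw [hI, hI, hI1] at this
  exact this
end

section
/- For every λ ∈ [0,1], E[exp(λη)] ≤ (E[exp η])^{λ²} · exp(λ(1-λ) E[η]), where η = Φ(h + σz). -/
open MeasureTheory ProbabilityTheory Real Filter Topology

lemma aux_log (l a : ℝ) (hl0 : 0 ≤ l) (hl1 : l ≤ 1) (ha : 0 ≤ a) :
    log (1 + l * a) ≤ l ^ 2 * log (1 + a) + l * (1 - l) * a := by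
  have hd : ∀ x : ℝ, 0 ≤ x → HasDerivAt
      (fun a : ℝ => l ^ 2 * log (1 + a) + l * (1 - l) * a - log (1 + l * a))
      (l ^ 2 * (1 / (1 + x)) + l * (1 - l) * 1 - (l * 1) / (1 + l * x)) x := by
    intro x hx
    have h1 : HasDerivAt (fun a : ℝ => 1 + a) 1 x := (hasDerivAt_id x).const_add 1
    have h2 : HasDerivAt (fun a : ℝ => 1 + l * a) (l * 1) x :=
      ((hasDerivAt_id x).const_mul l).const_add 1
    have e1 : 1 + x ≠ 0 := by positivity
    have e2 : 1 + l * x ≠ 0 := by positivity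
    exact (((h1.log e1).const_mul (l ^ 2)).add ((hasDerivAt_id x).const_mul (l * (1 - l)))).sub
      (h2.log e2)
  have hm : MonotoneOn (fun a : ℝ => l ^ 2 * log (1 + a) + l * (1 - l) * a - log (1 + l * a))
      (Set.Ici 0) := by
    apply monotoneOn_of_deriv_nonneg (convex_Ici 0)
    · intro x hx
      exact (hd x hx).continuousAt.continuousWithinAt
    · intro x hx
      rw [interior_Ici] at hx
      exact (hd x (le_of_lt hx)).differentiableAt.differentiableWithinAt
    · intro x hx
      rw [interior_Ici] at hx
      have hx0 : 0 < x := hx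
      rw [(hd x hx0.le).deriv]
      have : l ^ 2 * (1 / (1 + x)) + l * (1 - l) * 1 - (l * 1) / (1 + l * x)
          = l ^ 2 * (1 - l) * x ^ 2 / ((1 + x) * (1 + l * x)) := by
        have e1 : 1 + x ≠ 0 := by positivity
        have e2 : 1 + l * x ≠ 0 := by positivity
        field_simp
        ring
      rw [this]
      have : 0 ≤ 1 - l := by linarith
      positivity
  have := hm (Set.mem_Ici.2 le_rfl) (Set.mem_Ici.2 ha) ha
  simp at this
  linarith

lemma aux_cdf (p : ℝ → ℝ) (hp : Continuous p) (hi : Integrable p) (h1 : ∫ x, p x = 1) :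
    ∃ P : ℝ → ℝ, (∀ x, HasDerivAt P (p x) x) ∧ Tendsto P atBot (𝓝 0) ∧ Tendsto P atTop (𝓝 1) := by
  refine ⟨fun x => (∫ t in (0:ℝ)..x, p t) + ∫ t in Set.Iic 0, p t, ?_, ?_, ?_⟩
  · intro x
    exact (hp.integral_hasStrictDerivAt 0 x).hasDerivAt.add_const _
  · have := intervalIntegral_tendsto_integral_Iic (μ := volume) (f := p) 0 hi.integrableOn tendsto_id
    have h2 := this.neg.add_const (∫ t in Set.Iic 0, p t)
    simp only [neg_add_cancel] at h2
    refine h2.congr fun x => ?_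
    simp only [id]
    rw [← intervalIntegral.integral_symm]
  · have := intervalIntegral_tendsto_integral_Ioi (μ := volume) (f := p) 0 hi.integrableOn tendsto_id
    have h2 := this.add_const (∫ t in Set.Iic 0, p t)
    rw [add_comm (∫ t in Set.Ioi 0, p t), intervalIntegral.integral_Iic_add_Ioi hi.integrableOn hi.integrableOn, h1] at h2
    exact h2

lemma aux_cdf_props (P p : ℝ → ℝ) (hP : ∀ x, HasDerivAt P (p x) x) (hpos : ∀ x, 0 < p x)
    (h0 : Tendsto P atBot (𝓝 0)) (h1 : Tendsto P atTop (𝓝 1)) :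
    StrictMono P ∧ Continuous P ∧ ∀ y, y ∈ Set.Ioo (0:ℝ) 1 ↔ ∃ x, P x = y := by
  have hs : StrictMono P := strictMono_of_deriv_pos fun x => by rw [(hP x).deriv]; exact hpos x
  have hc : Continuous P := continuous_iff_continuousAt.2 fun x => (hP x).continuousAt
  refine ⟨hs, hc, fun y => ⟨fun hy => ?_, ?_⟩⟩
  · obtain ⟨a, ha⟩ := (h0.eventually (gt_mem_nhds hy.1)).exists
    obtain ⟨b, hb⟩ := (h1.eventually (lt_mem_nhds hy.2)).exists
    exact mem_range_of_exists_le_of_exists_ge hc ⟨a, ha.le⟩ ⟨b, hb.le⟩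
  · rintro ⟨x, rfl⟩
    constructor
    · exact lt_of_le_of_lt (hs.monotone.le_of_tendsto h0 (x - 1)) (hs (by linarith))
    · exact lt_of_lt_of_le (hs (by linarith)) (hs.monotone.ge_of_tendsto h1 (x + 1))

lemma aux_transport (P p Q q : ℝ → ℝ) (hP : ∀ x, HasDerivAt P (p x) x) (hpos : ∀ x, 0 < p x)
    (h0 : Tendsto P atBot (𝓝 0)) (h1 : Tendsto P atTop (𝓝 1))
    (hQ : ∀ x, HasDerivAt Q (q x) x) (hqpos : ∀ x, 0 < q x) (hqc : Continuous q)
    (k0 : Tendsto Q atBot (𝓝 0)) (k1 : Tendsto Q atTop (𝓝 1)) :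
    ∃ T : ℝ → ℝ, (∀ x, Q (T x) = P x) ∧ Continuous T ∧
      ∀ x, HasDerivAt T (p x / q (T x)) x := by
  obtain ⟨ps, pc, pr⟩ := aux_cdf_props P p hP hpos h0 h1
  obtain ⟨qs, qc, qr⟩ := aux_cdf_props Q q hQ hqpos k0 k1
  have : ∀ x, ∃ y, Q y = P x := fun x => (qr _).1 ((pr _).2 ⟨x, rfl⟩)
  choose T hT using this
  have hTm : Monotone T := by
    intro x y hxy
    rw [← qs.le_iff_le, hT, hT]
    exact ps.monotone hxy
  have hTs : Function.Surjective T := by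
    intro y
    obtain ⟨x, hx⟩ := (pr _).1 ((qr _).2 ⟨y, rfl⟩)
    exact ⟨x, qs.injective (by rw [hT, hx])⟩
  have hTc := hTm.continuous_of_surjective hTs
  refine ⟨T, hT, hTc, fun x => ?_⟩
  have hst : HasStrictDerivAt Q (q (T x)) (T x) :=
    hasStrictDerivAt_of_hasDerivAt_of_continuousAt (Eventually.of_forall hQ) hqc.continuousAt
  have hne := (hqpos (T x)).ne'
  have hinv := (hst.to_localInverse hne).hasDerivAt
  rw [hT] at hinv
  have hcomp := HasDerivAt.comp x hinv (hP x)
  have hev := (hTc.tendsto x).eventually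
    (HasStrictFDerivAt.eventually_left_inverse (hst.hasStrictFDerivAt_equiv hne))
  have := hcomp.congr_of_eventuallyEq (f₁ := T) (by
    filter_upwards [hev] with z hz
    rw [hT] at hz
    exact hz.symm)
  rw [div_eq_inv_mul]
  exact this

lemma aux_expand (P p Q q : ℝ → ℝ) (hP : ∀ x, HasDerivAt P (p x) x)
    (h0 : Tendsto P atBot (𝓝 0)) (h1 : Tendsto P atTop (𝓝 1))
    (hQ : ∀ x, HasDerivAt Q (q x) x)
    (k0 : Tendsto Q atBot (𝓝 0)) (k1 : Tendsto Q atTop (𝓝 1))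
    (x y : ℝ) (hxy : Q y = P x)
    (c : ℝ → ℝ) (hc : ConvexOn ℝ Set.univ c) (hcp : ∀ u, 0 < c u ↔ p u < q (u + (y - x))) :
    q y ≤ p x := by
  by_contra! hcon
  have hcx : 0 < c x := by rw [hcp]; simpa using hcon
  set D : ℝ → ℝ := fun u => Q (u + (y - x)) - P u with hD
  have hDd : ∀ u, HasDerivAt D (q (u + (y - x)) - p u) u := fun u =>
    ((hQ _).comp_add_const u (y - x)).sub (hP u)
  have hDc : Continuous D := continuous_iff_continuousAt.2 fun x => (hDd x).continuousAt
  have hDx : D x = 0 := by simp [hD, hxy]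
  have hbot : Tendsto D atBot (𝓝 0) := by
    simpa using (k0.comp (tendsto_atBot_add_const_right _ (y - x) tendsto_id)).sub h0
  have htop : Tendsto D atTop (𝓝 0) := by
    simpa using (k1.comp (tendsto_atTop_add_const_right _ (y - x) tendsto_id)).sub h1
  have hdich : (∀ u ≤ x, 0 < c u) ∨ (∀ u, x ≤ u → 0 < c u) := by
    by_contra! hh
    obtain ⟨⟨u, hu, hu'⟩, ⟨w, hw, hw'⟩⟩ := hh
    have := hc.le_max_of_mem_Icc (Set.mem_univ u) (Set.mem_univ w) ⟨hu, hw⟩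
    have h2 := max_le hu' hw'
    linarith
  rcases hdich with hl | hr
  · have hm : StrictMonoOn D (Set.Iic x) := by
      apply strictMonoOn_of_deriv_pos (convex_Iic x) hDc.continuousOn
      intro u hu
      rw [interior_Iic] at hu
      rw [(hDd u).deriv]
      have := (hcp u).1 (hl u (le_of_lt hu))
      linarith
    have h3 : D (x - 1) < D x := hm (by simp) (by simp) (by linarith)
    have h4 : 0 ≤ D (x - 1) := by
      apply le_of_tendsto hbot
      filter_upwards [eventually_le_atBot (x - 1)] with u hu
      exact hm.monotoneOn (by simp; linarith) (by simp) hu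
    linarith
  · have hm : StrictMonoOn D (Set.Ici x) := by
      apply strictMonoOn_of_deriv_pos (convex_Ici x) hDc.continuousOn
      intro u hu
      rw [interior_Ici] at hu
      rw [(hDd u).deriv]
      have := (hcp u).1 (hr u (le_of_lt hu))
      linarith
    have h3 : D x < D (x + 1) := hm (by simp) (by simp) (by linarith)
    have h4 : D (x + 1) ≤ 0 := by
      apply ge_of_tendsto htop
      filter_upwards [eventually_ge_atTop (x + 1)] with u hu
      exact hm.monotoneOn (by simp) (by simp; linarith) hu
    linarith


lemma aux_tail (f : ℝ → ℝ) (hf : Integrable f) (δ : ℝ) (hδ : 0 < δ)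
    (h : ∀ᶠ x in atTop, δ ≤ f x) : False := by
  obtain ⟨N, hN⟩ := eventually_atTop.1 h
  have h1 := hf.measure_norm_ge_lt_top hδ
  have h2 : Set.Ici N ⊆ {x | δ ≤ ‖f x‖} := fun x hx => (hN x hx).trans (le_abs_self _)
  have h3 := measure_mono (μ := volume) h2
  rw [Real.volume_Ici] at h3
  exact absurd h1 (not_lt.2 h3)

lemma aux_core_s3 (g : ℝ → ℝ) (hg : ConvexOn ℝ Set.univ g) (hgc : Continuous g)
    (φ : ℝ → ℝ) (c : ℝ) (hc : 0 < c) (hφ : ∀ x, φ x = c * exp (-x ^ 2 / 2))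
    (hφi : Integrable φ) (hφ1 : ∫ x, φ x = 1)
    (l : ℝ) (hl0 : 0 < l) (hl1 : l < 1)
    (hI1 : Integrable (fun x => φ x * exp (l * g x)))
    (hI2 : Integrable (fun x => φ x * exp (g x)))
    (hI3 : Integrable (fun x => φ x * g x))
    (hI4 : Integrable (fun x => |x| * (φ x * exp (l * g x))))
    (hI5 : Integrable (fun x => x * φ x)) :
    log (∫ x, φ x * exp (l * g x)) ≤
      l ^ 2 * log (∫ x, φ x * exp (g x)) + l * (1 - l) * ∫ x, φ x * g x := by
  have hφpos : ∀ x, 0 < φ x := fun x => by rw [hφ]; positivity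
  have hφc : Continuous φ := by
    have : φ = fun x => c * exp (-x ^ 2 / 2) := funext hφ
    rw [this]; fun_prop
  have hlogφ : ∀ x, log (φ x) = log c - x ^ 2 / 2 := fun x => by
    rw [hφ, log_mul hc.ne' (exp_pos _).ne', log_exp]; ring
  have hφd : ∀ x, HasDerivAt φ (-x * φ x) x := fun x => by
    have : φ = fun x => c * exp (-x ^ 2 / 2) := funext hφ
    have h1 : HasDerivAt (fun x : ℝ => -x ^ 2 / 2) (-x) x := by
      have := ((hasDerivAt_pow 2 x).neg).div_const 2
      have e : -((2 : ℕ) * x ^ (2 - 1)) / 2 = -x := by norm_num; ring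
      rw [e] at this
      exact this
    have h2 := h1.exp.const_mul c
    have e : c * (exp (-x ^ 2 / 2) * -x) = -x * φ x := by rw [hφ]; ring
    rw [e, ← this] at h2
    exact h2
  have hposint : ∀ f : ℝ → ℝ, Integrable f → (∀ x, 0 < f x) → 0 < ∫ x, f x := by
    intro f hf hp
    rw [integral_pos_iff_support_of_nonneg (fun x => (hp x).le) hf]
    have : Function.support f = Set.univ := by
      ext x; simp [(hp x).ne']
    rw [this]; simp
  set Z := ∫ x, φ x * exp (l * g x) with hZ
  set Z1 := ∫ x, φ x * exp (g x) with hZ1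
  have hZp : 0 < Z := hposint _ hI1 fun x => mul_pos (hφpos x) (exp_pos _)
  have hZ1p : 0 < Z1 := hposint _ hI2 fun x => mul_pos (hφpos x) (exp_pos _)
  set q : ℝ → ℝ := fun x => φ x * exp (l * g x) / Z with hq
  have hqpos : ∀ x, 0 < q x := fun x => div_pos (mul_pos (hφpos x) (exp_pos _)) hZp
  have hqc : Continuous q := by rw [hq]; fun_prop
  have hqi : Integrable q := hI1.div_const Z
  have hq1 : ∫ x, q x = 1 := by
    rw [hq, integral_div, ← hZ, div_self hZp.ne']
  have hlogq : ∀ x, log (q x) = log c - x ^ 2 / 2 + l * g x - log Z := fun x => by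
    rw [hq]
    simp only
    rw [log_div (mul_pos (hφpos x) (exp_pos _)).ne' hZp.ne', log_mul (hφpos x).ne' (exp_pos _).ne',
      hlogφ, log_exp]
  obtain ⟨P, hP, hP0, hP1⟩ := aux_cdf φ hφc hφi hφ1
  obtain ⟨Q, hQ, hQ0, hQ1⟩ := aux_cdf q hqc hqi hq1
  obtain ⟨T, hTQ, hTc, hTd⟩ := aux_transport P φ Q q hP hφpos hP0 hP1 hQ hqpos hqc hQ0 hQ1
  set t : ℝ → ℝ := fun x => φ x / q (T x) with ht
  have htc : Continuous t := by
    rw [ht]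
    exact hφc.div (hqc.comp hTc) fun x => (hqpos _).ne'
  have ht1 : ∀ x, 1 ≤ t x := by
    intro x
    rw [ht]
    simp only
    rw [le_div_iff₀ (hqpos _), one_mul]
    set d := T x - x with hd
    refine aux_expand P φ Q q hP hP0 hP1 hQ hQ0 hQ1 x (T x) (hTQ x)
      (fun u => l * g (u + d) + (-(d * u) - d ^ 2 / 2 - log Z)) ?_ ?_
    · have h1 : ConvexOn ℝ Set.univ (fun u => g (u + d)) := by
        refine ⟨convex_univ, fun a _ b _ s r hs hr hsr => ?_⟩
        have := hg.2 (Set.mem_univ (a + d)) (Set.mem_univ (b + d)) hs hr hsr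
        simp only [smul_eq_mul] at this ⊢
        rwa [show s * (a + d) + r * (b + d) = s * a + r * b + d by
          linear_combination d * hsr] at this
      have h1' := h1.smul hl0.le
      refine h1'.add ?_
      refine ⟨convex_univ, fun a _ b _ s r _ _ hsr => le_of_eq ?_⟩
      simp only [smul_eq_mul]
      linear_combination (d ^ 2 / 2 + log Z) * hsr
    · intro u
      rw [← log_lt_log_iff (hφpos _) (hqpos _), hlogφ, hlogq]
      constructor <;> intro hh <;> nlinarith
  have htlog : ∀ x, log (t x) = - x ^ 2 / 2 + T x ^ 2 / 2 - l * g (T x) + log Z := fun x => by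
    rw [ht]
    simp only
    rw [log_div (hφpos x).ne' (hqpos _).ne', hlogφ, hlogq]; ring
  set v : ℝ → ℝ := fun x => (T x - x) / l with hv
  set a : ℝ → ℝ := fun x => (t x - 1) / l with ha
  have hac : Continuous a := by rw [ha]; fun_prop
  have hvc : Continuous v := by rw [hv]; fun_prop
  have ha0 : ∀ x, 0 ≤ a x := fun x => div_nonneg (by linarith [ht1 x]) hl0.le
  have hvd : ∀ x, HasDerivAt v (a x) x := fun x => ((hTd x).sub (hasDerivAt_id x)).div_const l
  have hTv : ∀ x, T x = x + l * v x := fun x => by rw [hv]; field_simp; ring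
  have hta : ∀ x, t x = 1 + l * a x := fun x => by rw [ha]; field_simp; ring
  set R : ℝ → ℝ := fun x => x + v x with hR
  have hRd : ∀ x, HasDerivAt R (1 + a x) x := fun x => (hasDerivAt_id x).add (hvd x)
  have hRm : StrictMono R := strictMono_of_deriv_pos fun x => by
    rw [(hRd x).deriv]; linarith [ha0 x]
  have hTm : StrictMono T := strictMono_of_deriv_pos fun x => by
    rw [(hTd x).deriv]; exact div_pos (hφpos _) (hqpos _)
  -- change of variables
  set E : ℝ → ℝ := fun x => (1 + a x) * (φ (R x) * exp (g (R x))) with hE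
  have hEpos : ∀ x, 0 < E x := fun x =>
    mul_pos (by linarith [ha0 x]) (mul_pos (hφpos _) (exp_pos _))
  have habs : ∀ x, |1 + a x| = 1 + a x := fun x => abs_of_pos (by linarith [ha0 x])
  have hEi : Integrable E := by
    have := (integrableOn_image_iff_integrableOn_abs_deriv_smul (f := R) (f' := fun x => 1 + a x)
      MeasurableSet.univ (fun x _ => (hRd x).hasDerivWithinAt) hRm.injective.injOn
      (fun x => φ x * exp (g x))).1 hI2.integrableOn
    simpa [habs, integrableOn_univ] using this
  have hEle : ∫ x, E x ≤ Z1 := by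
    have := integral_image_eq_integral_abs_deriv_smul (f := R) (f' := fun x => 1 + a x)
      MeasurableSet.univ (fun x _ => (hRd x).hasDerivWithinAt) hRm.injective.injOn
      (fun x => φ x * exp (g x))
    simp only [habs, smul_eq_mul, Measure.restrict_univ] at this
    rw [← this]
    exact setIntegral_le_integral hI2 (Eventually.of_forall fun x =>
      (mul_pos (hφpos x) (exp_pos _)).le)
  have hvφ : Integrable (fun x => v x * φ x) := by
    have h1 : Integrable (fun x => x * q x) := by
      have h2 : Integrable (fun x => |x| * q x) := by
        refine (hI4.div_const Z).congr (Eventually.of_forall fun x => ?_)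
        simp only [hq]; ring
      refine h2.mono (by fun_prop) (Eventually.of_forall fun x => ?_)
      simp
    have h3 := (integrableOn_image_iff_integrableOn_abs_deriv_smul (f := T) (f' := t)
      MeasurableSet.univ (fun x _ => (hTd x).hasDerivWithinAt) hTm.injective.injOn
      (fun x => x * q x)).1 h1.integrableOn
    rw [integrableOn_univ] at h3
    refine ((h3.sub hI5).div_const l).congr (Eventually.of_forall fun x => ?_)
    have e1 : |t x| = t x := abs_of_pos (by linarith [ht1 x])
    have e2 : t x * q (T x) = φ x := div_mul_cancel₀ _ (hqpos _).ne'
    simp only [Pi.sub_apply, smul_eq_mul, e1, hv]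
    rw [show t x * (T x * q (T x)) = T x * (t x * q (T x)) by ring, e2]
    ring
  set H : ℝ → ℝ := fun x => log Z * φ x - l ^ 2 * (E x / Z1 - φ x + log Z1 * φ x)
    - l * (1 - l) * (φ x * g x) with hH
  have hHi : Integrable H :=
    ((hφi.const_mul _).sub ((((hEi.div_const Z1).sub hφi).add (hφi.const_mul _)).const_mul _)).sub
      (hI3.const_mul _)
  have hHint : ∫ x, H x = log Z - l ^ 2 * ((∫ x, E x) / Z1 - 1 + log Z1)
      - l * (1 - l) * ∫ x, φ x * g x := by
    have i1 : Integrable (fun x => E x / Z1 - φ x) := (hEi.div_const Z1).sub hφi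
    have i2 : Integrable (fun x => E x / Z1 - φ x + log Z1 * φ x) := i1.add (hφi.const_mul _)
    have i3 : Integrable (fun x => log Z * φ x - l ^ 2 * (E x / Z1 - φ x + log Z1 * φ x)) :=
      (hφi.const_mul _).sub (i2.const_mul _)
    rw [hH, integral_sub i3 (hI3.const_mul _), integral_sub (hφi.const_mul _) (i2.const_mul _),
      integral_const_mul, integral_const_mul, integral_const_mul, integral_add i1 (hφi.const_mul _),
      integral_sub (hEi.div_const Z1) hφi, integral_div, integral_const_mul, hφ1]
    ring
  have hpt : ∀ x, H x ≤ l * (1 - l) * (a x * φ x + v x * (-x * φ x)) := by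
    intro x
    have hy : 0 < E x / (φ x * Z1) := div_pos (hEpos x) (mul_pos (hφpos x) hZ1p)
    have h1 := log_le_sub_one_of_pos hy
    have h2 : log (E x / (φ x * Z1)) =
        log (1 + a x) - R x ^ 2 / 2 + x ^ 2 / 2 + g (R x) - log Z1 := by
      rw [log_div (hEpos x).ne' (mul_pos (hφpos x) hZ1p).ne', log_mul (hφpos x).ne' hZ1p.ne', hE]
      simp only
      rw [log_mul (by linarith [ha0 x]) (mul_pos (hφpos _) (exp_pos _)).ne',
        log_mul (hφpos _).ne' (exp_pos _).ne', hlogφ, hlogφ, log_exp]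
      ring
    have h3 := htlog x
    have h4 := aux_log l (a x) hl0.le hl1.le (ha0 x)
    rw [← hta] at h4
    have h5 : g (T x) ≤ l * g (R x) + (1 - l) * g x := by
      have := hg.2 (Set.mem_univ (R x)) (Set.mem_univ x) hl0.le (by linarith : 0 ≤ 1 - l) (by ring)
      simp only [smul_eq_mul] at this
      rwa [show l * R x + (1 - l) * x = T x by rw [hTv, hR]; ring] at this
    have h6 : log Z - l ^ 2 * (E x / (φ x * Z1) - 1 + log Z1) - l * (1 - l) * g x
        ≤ l * (1 - l) * (a x + v x * (-x)) := by
      rw [h2] at h1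
      have h1' := mul_le_mul_of_nonneg_left h1 (sq_nonneg l)
      have h5' := mul_le_mul_of_nonneg_left h5 hl0.le
      have hRx : R x = x + v x := rfl
      rw [hTv x] at h3 h5'
      rw [hRx] at h1' h5'
      nlinarith
    have h7 := mul_le_mul_of_nonneg_right h6 (hφpos x).le
    have h8 : E x / (φ x * Z1) * φ x = E x / Z1 := by
      have := (hφpos x).ne'
      field_simp
    calc H x = (log Z - l ^ 2 * (E x / (φ x * Z1) - 1 + log Z1) - l * (1 - l) * g x) * φ x := by
          simp only [hH]; rw [← h8]; ring
      _ ≤ _ := h7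
      _ = _ := by ring
  set B : ℝ → ℝ := fun n => v n * φ n - v (-n) * φ (-n) with hB
  have hBi : Integrable B := hvφ.sub hvφ.comp_neg
  have hle : ∀ n, 0 ≤ n → ∫ x in (-n)..n, H x ≤ l * (1 - l) * B n := by
    intro n hn
    have hdc : Continuous (fun x => a x * φ x + v x * (-x * φ x)) := by fun_prop
    have h1 : ∫ x in (-n)..n, (a x * φ x + v x * (-x * φ x)) = B n :=
      intervalIntegral.integral_eq_sub_of_hasDerivAt (f := fun x => v x * φ x)
        (fun x _ => (hvd x).mul (hφd x)) (hdc.intervalIntegrable _ _)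
    rw [← h1, ← intervalIntegral.integral_const_mul]
    exact intervalIntegral.integral_mono_on (by linarith) hHi.intervalIntegrable
      ((hdc.const_mul _).intervalIntegrable _ _) fun x _ => hpt x
  have hlim : Tendsto (fun n : ℝ => ∫ x in (-n)..n, H x) atTop (𝓝 (∫ x, H x)) :=
    intervalIntegral_tendsto_integral hHi tendsto_neg_atTop_atBot tendsto_id
  have hfin : ∫ x, H x ≤ 0 := by
    by_contra! hK
    have hev := hlim.eventually (lt_mem_nhds (half_lt_self hK))
    refine aux_tail (fun n => l * (1 - l) * B n) (hBi.const_mul _) _ (half_pos hK) ?_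
    filter_upwards [hev, eventually_ge_atTop 0] with n hn hn0
    exact hn.le.trans (hle n hn0)
  rw [hHint] at hfin
  have hr : (∫ x, E x) / Z1 ≤ 1 := (div_le_one hZ1p).2 hEle
  have := mul_le_mul_of_nonneg_left hr (sq_nonneg l)
  nlinarith

/-- For `η = Φ (h + σ z)` and `λ ∈ [0,1]`,
`E[exp (λ η)] ≤ (E[exp η])^(λ²) * exp (λ (1 - λ) E[η])`. -/
theorem mgf_interpolation_bound
    (Φ : ℝ → ℝ) (hΦsmooth : ContDiff ℝ (⊤ : ℕ∞) Φ)
    (hΦconv : ConvexOn ℝ Set.univ Φ)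
    (hΦsymm : ∀ x, Φ (-x) = Φ x) (hΦ0 : Φ 0 = 0)
    (h σ : ℝ) (hσ : 0 < σ)
    (hint : ∀ m : ℝ, 0 ≤ m →
      Integrable (fun z => Real.exp (m * Φ (h + σ * z))) (gaussianReal 0 1))
    (hint1 : Integrable (fun z => Φ (h + σ * z)) (gaussianReal 0 1)) :
    ∀ l : ℝ, l ∈ Set.Icc (0 : ℝ) 1 →
      (∫ z, Real.exp (l * Φ (h + σ * z)) ∂(gaussianReal 0 1))
        ≤ (∫ z, Real.exp (Φ (h + σ * z)) ∂(gaussianReal 0 1)) ^ (l ^ 2)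
            * Real.exp (l * (1 - l) * ∫ z, Φ (h + σ * z) ∂(gaussianReal 0 1)) := by
  intro l hl
  rcases eq_or_lt_of_le hl.1 with h0 | hl0
  · subst h0; simp
  rcases eq_or_lt_of_le hl.2 with h1 | hl1
  · subst h1; simp
  have hconv : ∀ f : ℝ → ℝ, Integrable f (gaussianReal 0 1) →
      Integrable (fun x => gaussianPDFReal 0 1 x * f x) := by
    intro f hf
    rw [gaussianReal_of_var_ne_zero 0 one_ne_zero,
      integrable_withDensity_iff_integrable_smul' (measurable_gaussianPDF 0 1)
      (Eventually.of_forall fun x => gaussianPDF_lt_top)] at hf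
    simpa [toReal_gaussianPDF] using hf
  have hΦc := hΦsmooth.continuous
  have hid : MemLp (fun x : ℝ => x) 2 (gaussianReal 0 1) := by
    simpa using! memLp_id_gaussianReal (μ := 0) (v := 1) 2
  have hx : Integrable (fun x : ℝ => x) (gaussianReal 0 1) := hid.integrable (by norm_num)
  have he2 : MemLp (fun z => Real.exp (l * Φ (h + σ * z))) 2 (gaussianReal 0 1) := by
    rw [memLp_two_iff_integrable_sq (hint l hl0.le).1]
    refine (hint (2 * l) (by linarith)).congr (Eventually.of_forall fun x => ?_)
    simp only
    rw [← Real.exp_nat_mul]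
    congr 1; push_cast; ring
  have hx4 : Integrable (fun z => |z| * Real.exp (l * Φ (h + σ * z))) (gaussianReal 0 1) :=
    hid.abs.integrable_mul he2
  have hI2 := hint 1 zero_le_one
  simp only [one_mul] at hI2
  have hg : ConvexOn ℝ Set.univ (fun z => Φ (h + σ * z)) := by
    refine ⟨convex_univ, fun x _ y _ a b ha hb hab => ?_⟩
    have := hΦconv.2 (Set.mem_univ (h + σ * x)) (Set.mem_univ (h + σ * y)) ha hb hab
    simp only [smul_eq_mul] at this ⊢
    rwa [show a * (h + σ * x) + b * (h + σ * y) = h + σ * (a * x + b * y) by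
      linear_combination h * hab] at this
  have key := aux_core_s3 (fun z => Φ (h + σ * z)) hg (by fun_prop) (gaussianPDFReal 0 1)
    (√(2 * π))⁻¹ (by positivity) (fun x => by simp [gaussianPDFReal_def])
    (integrable_gaussianPDFReal 0 1) (integral_gaussianPDFReal_eq_one 0 one_ne_zero) l hl0 hl1
    (hconv _ (hint l hl0.le)) (hconv _ hI2) (hconv _ hint1)
    ((hconv _ hx4).congr (Eventually.of_forall fun x => by simp only; ring))
    ((hconv _ hx).congr (Eventually.of_forall fun x => by simp only; ring))
  have hint_eq : ∀ f : ℝ → ℝ, ∫ x, gaussianPDFReal 0 1 x * f x = ∫ x, f x ∂(gaussianReal 0 1) := by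
    intro f
    rw [integral_gaussianReal_eq_integral_smul one_ne_zero]; simp
  simp only [hint_eq] at key
  have hp1 := integral_exp_pos (hint l hl0.le)
  have hp2 := integral_exp_pos hI2
  rw [Real.rpow_def_of_pos hp2, ← Real.exp_add, ← Real.log_le_iff_le_exp hp1]
  linarith
end

section
/- If f : ℝ → ℝ is odd (f(-x) = -f(x)) and nonnegative on [0,∞), then g(x) = E[V(x,z) f(x+z)] is odd and nonnegative on [0,∞), where V(x,z) = exp(m(Φ̃(x+z) - ψ(x))) is the Gibbs change of density associated with a convex symmetric Φ̃. -/
open MeasureTheory ProbabilityTheory Real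

/-- Lemma 2(c): if `f` is odd and nonnegative on `[0,∞)`, then
`g(x) = E[V(x,z) f(x+z)]` is odd and nonnegative on `[0,∞)`. -/
theorem gibbs_preserves_odd_nonneg
    (Φ : ℝ → ℝ) (hΦsmooth : ContDiff ℝ (⊤ : ℕ∞) Φ)
    (hΦconv : ConvexOn ℝ Set.univ Φ)
    (hΦsymm : ∀ x, Φ (-x) = Φ x) (hΦnonneg : ∀ x, 0 ≤ Φ x)
    (σ2 : NNReal) (hσ2 : 0 < σ2) (m : ℝ) (hm : 0 ≤ m)
    (f : ℝ → ℝ) (hfodd : ∀ x, f (-x) = -f x) (hfnonneg : ∀ x, 0 ≤ x → 0 ≤ f x)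
    (ψ : ℝ → ℝ)
    (hψ : ∀ x, ψ x = (1 / m) *
      Real.log (∫ z, Real.exp (m * Φ (x + z)) ∂(gaussianReal 0 σ2)))
    (V : ℝ → ℝ → ℝ)
    (hV : ∀ x z, V x z = Real.exp (m * (Φ (x + z) - ψ x)))
    (hint : ∀ x, Integrable (fun z => V x z * f (x + z)) (gaussianReal 0 σ2))
    (g : ℝ → ℝ)
    (hg : ∀ x, g x = ∫ z, V x z * f (x + z) ∂(gaussianReal 0 σ2)) :
    (∀ x, g (-x) = -g x) ∧ (∀ x, 0 ≤ x → 0 ≤ g x) := by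
  have hneg : ∀ F : ℝ → ℝ, ∫ z, F (-z) ∂(gaussianReal 0 σ2) = ∫ z, F z ∂(gaussianReal 0 σ2) := by
    intro F
    have h1 : (gaussianReal 0 σ2).map (MeasurableEquiv.neg ℝ) = gaussianReal 0 σ2 := by
      have := gaussianReal_map_neg (μ := 0) (v := σ2)
      simpa using this
    conv_rhs => rw [← h1]
    rw [MeasureTheory.integral_map_equiv]
    rfl
  have hψe : ∀ x, ψ (-x) = ψ x := by
    intro x
    rw [hψ, hψ, ← hneg]
    congr 3
    funext z
    rw [← neg_add, hΦsymm]
  refine ⟨?_, ?_⟩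
  · intro x
    rw [hg, hg, ← hneg, ← integral_neg]
    congr 1
    funext z
    rw [hV, hV, hψe, ← neg_add, hΦsymm, hfodd]
    ring
  · intro x hx
    rw [hg, integral_gaussianReal_eq_integral_smul hσ2.ne']
    set F : ℝ → ℝ := fun y => gaussianPDFReal 0 σ2 (y - x) *
      (Real.exp (m * (Φ y - ψ x)) * f y) with hF
    have e1 : ∫ z, gaussianPDFReal 0 σ2 z • (V x z * f (x + z)) = ∫ y, F y := by
      rw [← integral_add_left_eq_self F x]
      congr 1
      funext z
      simp [hF, hV]
    rw [e1]
    by_cases hI : Integrable F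
    · have h2 : ∫ y, (F y + F (-y)) = 2 * ∫ y, F y := by
        rw [integral_add hI hI.comp_neg, integral_neg_eq_self F]
        ring
      have h3 : 0 ≤ ∫ y, (F y + F (-y)) := by
        have key : ∀ y, 0 ≤ y → 0 ≤ F y + F (-y) := by
          intro y hy
          have hp : gaussianPDFReal 0 σ2 (-y - x) ≤ gaussianPDFReal 0 σ2 (y - x) := by
            unfold gaussianPDFReal
            gcongr ?_ * Real.exp (?_ / _)
            nlinarith [mul_nonneg hx hy]
          have : F y + F (-y) = (gaussianPDFReal 0 σ2 (y - x) - gaussianPDFReal 0 σ2 (-y - x)) *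
              (Real.exp (m * (Φ y - ψ x)) * f y) := by
            simp only [hF, hΦsymm, hfodd]
            ring
          rw [this]
          exact mul_nonneg (sub_nonneg.2 hp) (mul_nonneg (Real.exp_pos _).le (hfnonneg y hy))
        apply integral_nonneg
        intro y
        rcases le_total 0 y with hy | hy
        · exact key y hy
        · have := key (-y) (by linarith)
          rw [neg_neg] at this
          simp only [Pi.zero_apply]
          linarith
      linarith
    · rw [integral_undef hI]
end

section
/- The function f(x) = E[V(x,z) log V(x,z)] is in 𝒞, i.e., it is nonnegative, even, and nondecreasing on [0,∞), where V(x,z) = exp(m(Φ̃(x+z) - ψ(x))) is the Gibbs change of density associated with a convex symmetric nonnegative Φ̃. -/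
open MeasureTheory ProbabilityTheory Real

lemma aux_abs_le {F : ℝ → ℝ} (hc : ConvexOn ℝ Set.univ F) (hs : ∀ x, F (-x) = F x)
    {a b : ℝ} (h : |a| ≤ b) : F a ≤ F b := by
  obtain ⟨h1, h2⟩ := abs_le.1 h
  have := hc.le_max_of_mem_Icc (Set.mem_univ (-b)) (Set.mem_univ b) (z := a) ⟨h1, h2⟩
  simpa [hs] using this

lemma aux_deriv_odd {F : ℝ → ℝ} (hs : ∀ x, F (-x) = F x) (y : ℝ) :
    deriv F (-y) = - deriv F y := by
  have h : deriv (fun x => F (-x)) y = - deriv F (-y) := deriv_comp_neg F y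
  have h2 : (fun x => F (-x)) = F := funext hs
  rw [h2] at h
  linarith

lemma aux_deriv_bound {F : ℝ → ℝ} (hd : Differentiable ℝ F) (hc : ConvexOn ℝ Set.univ F)
    (hs : ∀ x, F (-x) = F x) (h0 : ∀ x, 0 ≤ F x) (y : ℝ) : |deriv F y| ≤ F (|y| + 1) := by
  have key : ∀ y, deriv F y ≤ F (|y| + 1) := by
    intro y
    have h := hc.deriv_le_slope (Set.mem_univ y) (Set.mem_univ (y + 1)) (by linarith) (hd y)
    rw [slope_def_field] at h
    have h2 : F (y + 1) ≤ F (|y| + 1) := aux_abs_le hc hs (by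
      simpa using abs_add_le y 1)
    have := h0 y
    simp at h
    linarith
  rw [abs_le]
  have h1 := key (-y)
  rw [aux_deriv_odd hs, abs_neg] at h1
  exact ⟨by linarith, key y⟩

lemma aux_hasDeriv {F : ℝ → ℝ} (hF : ContDiff ℝ 1 F) (hc : ConvexOn ℝ Set.univ F)
    (hs : ∀ x, F (-x) = F x) (h0 : ∀ x, 0 ≤ F x) (μ : Measure ℝ)
    (hi : ∀ x, Integrable (fun z => F (x + z)) μ) (x : ℝ) :
    Integrable (fun z => deriv F (x + z)) μ ∧
    HasDerivAt (fun x => ∫ z, F (x + z) ∂μ) (∫ z, deriv F (x + z) ∂μ) x := by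
  have hd : Differentiable ℝ F := hF.differentiable (by norm_num)
  have hdc : Continuous (deriv F) := hF.continuous_deriv (by norm_num)
  refine hasDerivAt_integral_of_dominated_loc_of_deriv_le (F := fun x z => F (x + z))
    (F' := fun x z => deriv F (x + z)) (s := Metric.ball x 1)
    (bound := fun z => F ((|x| + 2) + z) + F (-(|x| + 2) + z))
    (Metric.ball_mem_nhds x one_pos) ?_ (hi x) ?_ ?_ ((hi _).add (hi _)) ?_
  · exact Filter.Eventually.of_forall fun x => (hi x).aestronglyMeasurable
  · exact (by fun_prop : Continuous fun z => deriv F (x + z)).aestronglyMeasurable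
  · refine Filter.Eventually.of_forall fun z y hy => ?_
    rw [Metric.mem_ball, Real.dist_eq] at hy
    have hb := aux_deriv_bound hd hc hs h0 (y + z)
    rw [Real.norm_eq_abs]
    refine hb.trans ?_
    have h1 : |y| ≤ |x| + 1 := by
      have := abs_add_le (y - x) x
      simp at this; linarith
    have h2 := abs_add_le y z
    have h3 : F (|y + z| + 1) ≤ F (|x| + 2 + |z|) := aux_abs_le hc hs (by
      rw [abs_of_nonneg (by positivity)]; linarith)
    refine h3.trans ?_
    rcases abs_cases z with ⟨h, _⟩ | ⟨h, _⟩
    · rw [h]; linarith [h0 (-(|x| + 2) + z)]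
    · rw [h, ← hs (|x| + 2 + -z)]
      have e : -(|x| + 2 + -z) = -(|x| + 2) + z := by ring
      rw [e]
      linarith [h0 ((|x| + 2) + z)]
  · refine Filter.Eventually.of_forall fun z y hy => ?_
    exact (hd (y + z)).hasDerivAt.comp_add_const y z

lemma aux_int4 {p q r s : ℝ → ℝ} (hp : Integrable p) (hq : Integrable q) (hr : Integrable r)
    (hs : Integrable s) (k c d e : ℝ) : ∫ x, (k * p x - c * q x - d * r x + e * s x) =
      k * (∫ x, p x) - c * (∫ x, q x) - d * (∫ x, r x) + e * ∫ x, s x := by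
  have h1 : Integrable (fun x => k * p x) := hp.const_mul k
  have h2 : Integrable (fun x => c * q x) := hq.const_mul c
  have h3 : Integrable (fun x => d * r x) := hr.const_mul d
  have h4 : Integrable (fun x => e * s x) := hs.const_mul e
  have h5 : Integrable (fun x => k * p x - c * q x) := h1.sub h2
  have h6 : Integrable (fun x => k * p x - c * q x - d * r x) := h5.sub h3
  rw [integral_add h6 h4, integral_sub h5 h3, integral_sub h1 h2]
  simp only [integral_const_mul]

lemma aux_cheb {a b w : ℝ → ℝ} (hw : ∀ x, 0 ≤ w x)
    (hab : ∀ x y, 0 ≤ (a x - a y) * (b x - b y))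
    (i1 : Integrable w) (ia : Integrable (fun x => a x * w x))
    (ib : Integrable (fun x => b x * w x)) (iab : Integrable (fun x => a x * b x * w x)) :
    (∫ x, a x * w x) * (∫ x, b x * w x) ≤ (∫ x, a x * b x * w x) * ∫ x, w x := by
  have h1 : ∀ y, 0 ≤ (∫ x, a x * b x * w x) - a y * (∫ x, b x * w x)
      - b y * (∫ x, a x * w x) + a y * b y * ∫ x, w x := by
    intro y
    have : 0 ≤ ∫ x, (1 * (a x * b x * w x) - a y * (b x * w x) - b y * (a x * w x)
        + a y * b y * w x) := by
      refine integral_nonneg fun x => ?_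
      have := mul_nonneg (hab x y) (hw x)
      simp only [Pi.zero_apply]
      linarith
    rwa [aux_int4 iab ib ia i1, one_mul] at this
  generalize hIab : (∫ x, a x * b x * w x) = Iab at *
  generalize hIa : (∫ x, a x * w x) = Ia at *
  generalize hIb : (∫ x, b x * w x) = Ib at *
  generalize hI : (∫ x, w x) = I at *
  have : 0 ≤ ∫ y, (Iab * w y - Ib * (a y * w y) - Ia * (b y * w y) + I * (a y * b y * w y)) := by
    refine integral_nonneg fun y => ?_
    have := mul_nonneg (h1 y) (hw y)
    simp only [Pi.zero_apply]
    linarith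
  rw [aux_int4 i1 ia ib iab, hIab, hIa, hIb, hI] at this
  linarith

lemma aux_pdf_neg (v : NNReal) (y : ℝ) : gaussianPDFReal 0 v (-y) = gaussianPDFReal 0 v y := by
  simp [gaussianPDFReal]

lemma aux_symm {v : NNReal} (hv : v ≠ 0) {B : ℝ → ℝ} {ε : ℝ}
    (hB : ∀ y, B (-y) = ε * B y) (x : ℝ)
    (hi : Integrable (fun z => B (x + z)) (gaussianReal 0 v)) :
    Integrable (fun y => B y * (gaussianPDFReal 0 v (y - x) + ε * gaussianPDFReal 0 v (y + x))) ∧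
    ∫ y, B y * (gaussianPDFReal 0 v (y - x) + ε * gaussianPDFReal 0 v (y + x))
      = 2 * ∫ z, B (x + z) ∂(gaussianReal 0 v) := by
  have i0 : Integrable (fun z => gaussianPDFReal 0 v z * B (x + z)) := by
    rw [gaussianReal_of_var_ne_zero _ hv, integrable_withDensity_iff_integrable_smul'
      (measurable_gaussianPDF _ _) (Filter.Eventually.of_forall fun _ => gaussianPDF_lt_top)] at hi
    simpa using hi
  have e0 : ∫ z, B (x + z) ∂(gaussianReal 0 v) = ∫ z, gaussianPDFReal 0 v z * B (x + z) := by
    rw [integral_gaussianReal_eq_integral_smul hv]; simp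
  have i1 : Integrable (fun y => B y * gaussianPDFReal 0 v (y - x)) := by
    have := i0.comp_sub_right x
    refine this.congr (Filter.Eventually.of_forall fun y => ?_)
    simp [mul_comm]
  have e1 : ∫ y, B y * gaussianPDFReal 0 v (y - x) = ∫ z, gaussianPDFReal 0 v z * B (x + z) := by
    rw [← integral_sub_right_eq_self (fun z => gaussianPDFReal 0 v z * B (x + z)) x]
    refine integral_congr_ae (Filter.Eventually.of_forall fun y => ?_)
    simp [mul_comm]
  have hp : ∀ y, B (-y) * gaussianPDFReal 0 v (-y - x)
      = B y * (ε * gaussianPDFReal 0 v (y + x)) := by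
    intro y
    rw [hB, show -y - x = -(y + x) by ring, aux_pdf_neg]; ring
  have i2 : Integrable (fun y => B y * (ε * gaussianPDFReal 0 v (y + x))) := by
    have := i1.comp_neg
    simpa only [hp] using this
  have e2 : ∫ y, B y * (ε * gaussianPDFReal 0 v (y + x)) =
      ∫ z, gaussianPDFReal 0 v z * B (x + z) := by
    rw [← e1, ← integral_neg_eq_self (fun y => B y * gaussianPDFReal 0 v (y - x))]
    simp only [hp]
  simp only [mul_add]
  refine ⟨i1.add i2, ?_⟩
  rw [integral_add i1 i2, e0, e1, e2]; ring

lemma aux_tanh_mono {a b : ℝ} (h : a ≤ b) : tanh a ≤ tanh b := by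
  rw [tanh_eq_sinh_div_cosh, tanh_eq_sinh_div_cosh, div_le_div_iff₀ (cosh_pos _) (cosh_pos _)]
  have : 0 ≤ sinh (b - a) := sinh_nonneg_iff.2 (by linarith)
  rw [sinh_sub] at this
  linarith

lemma aux_pdf_tanh {v : NNReal} (hv : v ≠ 0) (x y : ℝ) :
    gaussianPDFReal 0 v (y - x) + (-1) * gaussianPDFReal 0 v (y + x) =
    tanh (x * y / v) * (gaussianPDFReal 0 v (y - x) + 1 * gaussianPDFReal 0 v (y + x)) := by
  have hv' : (v : ℝ) ≠ 0 := by exact_mod_cast hv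
  have h1 : gaussianPDFReal 0 v (y - x) =
      ((√(2 * π * v))⁻¹ * rexp (-(y ^ 2 + x ^ 2) / (2 * v))) * rexp (x * y / v) := by
    rw [gaussianPDFReal, mul_assoc (√(2 * π * v))⁻¹, ← Real.exp_add]
    congr 2; field_simp; ring
  have h2 : gaussianPDFReal 0 v (y + x) =
      ((√(2 * π * v))⁻¹ * rexp (-(y ^ 2 + x ^ 2) / (2 * v))) * rexp (-(x * y / v)) := by
    rw [gaussianPDFReal, mul_assoc (√(2 * π * v))⁻¹, ← Real.exp_add]
    congr 2; field_simp; ring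
  rw [h1, h2]
  generalize x * y / v = t
  have hc := cosh_pos t
  have ht : tanh t * (rexp t + rexp (-t)) = rexp t - rexp (-t) := by
    have h3 : rexp t + rexp (-t) = 2 * cosh t := by rw [cosh_eq]; ring
    have h4 : rexp t - rexp (-t) = 2 * sinh t := by rw [sinh_eq]; ring
    rw [h3, h4, tanh_eq_sinh_div_cosh]; field_simp
  linear_combination (-((√(2 * π * v))⁻¹ * rexp (-(y ^ 2 + x ^ 2) / (2 * v)))) * ht

/-- The key covariance inequality. -/
lemma aux_cov {v : NNReal} (hv : v ≠ 0) {L : ℝ → ℝ} (hd : Differentiable ℝ L)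
    (hc : ConvexOn ℝ Set.univ L) (hs : ∀ x, L (-x) = L x) {x : ℝ} (hx : 0 ≤ x)
    (i1 : Integrable (fun z => rexp (L (x + z))) (gaussianReal 0 v))
    (i2 : Integrable (fun z => L (x + z) * rexp (L (x + z))) (gaussianReal 0 v))
    (i3 : Integrable (fun z => deriv L (x + z) * rexp (L (x + z))) (gaussianReal 0 v))
    (i4 : Integrable (fun z => L (x + z) * deriv L (x + z) * rexp (L (x + z)))
      (gaussianReal 0 v)) :
    (∫ z, L (x + z) * rexp (L (x + z)) ∂(gaussianReal 0 v)) *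
      (∫ z, deriv L (x + z) * rexp (L (x + z)) ∂(gaussianReal 0 v)) ≤
    (∫ z, L (x + z) * deriv L (x + z) * rexp (L (x + z)) ∂(gaussianReal 0 v)) *
      (∫ z, rexp (L (x + z)) ∂(gaussianReal 0 v)) := by
  have ho := aux_deriv_odd hs
  obtain ⟨j1, e1⟩ := aux_symm hv (ε := 1) (B := fun y => rexp (L y))
    (by intro y; simp [hs]) x i1
  obtain ⟨j2, e2⟩ := aux_symm hv (ε := 1) (B := fun y => L y * rexp (L y))
    (by intro y; simp [hs]) x i2
  obtain ⟨j3, e3⟩ := aux_symm hv (ε := -1) (B := fun y => deriv L y * rexp (L y))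
    (by intro y; simp [hs, ho]) x i3
  obtain ⟨j4, e4⟩ := aux_symm hv (ε := -1) (B := fun y => L y * deriv L y * rexp (L y))
    (by intro y; simp [hs, ho]) x i4
  simp only [aux_pdf_tanh hv] at j3 j4 e3 e4
  set C : ℝ → ℝ := fun y => gaussianPDFReal 0 v (y - x) + 1 * gaussianPDFReal 0 v (y + x) with hC
  have hC0 : ∀ y, 0 ≤ C y := fun y => by
    have := gaussianPDFReal_nonneg 0 v (y - x)
    have := gaussianPDFReal_nonneg 0 v (y + x)
    simp only [hC]; linarith
  have hmono : ∀ y1 y2, 0 ≤ y1 → y1 ≤ y2 → deriv L y1 * tanh (x * y1 / v) ≤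
      deriv L y2 * tanh (x * y2 / v) := by
    intro y1 y2 h1 h12
    have hm := hc.monotoneOn_deriv (fun z _ => hd z)
    have hd0 : deriv L 0 = 0 := by have := ho 0; simp at this; linarith
    have hd1 : 0 ≤ deriv L y1 := by
      rw [← hd0]; exact hm (Set.mem_univ _) (Set.mem_univ _) h1
    have hd2 : deriv L y1 ≤ deriv L y2 := hm (Set.mem_univ _) (Set.mem_univ _) h12
    have ht : tanh (x * y1 / v) ≤ tanh (x * y2 / v) := aux_tanh_mono (by gcongr)
    have ht0 : 0 ≤ tanh (x * y1 / v) := by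
      have := aux_tanh_mono (a := 0) (b := x * y1 / v) (by positivity)
      simpa using this
    exact mul_le_mul hd2 ht ht0 (hd1.trans hd2)
  have hbabs : ∀ y, deriv L y * tanh (x * y / v) = deriv L |y| * tanh (x * |y| / v) := by
    intro y
    rcases abs_cases y with ⟨h, _⟩ | ⟨h, _⟩
    · rw [h]
    · rw [h, ho, show x * -y / (v : ℝ) = -(x * y / v) by ring, tanh_neg]; ring
  have habs : ∀ y, L y = L |y| := by
    intro y
    rcases abs_cases y with ⟨h, _⟩ | ⟨h, _⟩
    · rw [h]
    · rw [h, hs]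
  have hab : ∀ y1 y2, 0 ≤ (L y1 - L y2) *
      (deriv L y1 * tanh (x * y1 / v) - deriv L y2 * tanh (x * y2 / v)) := by
    intro y1 y2
    rw [habs y1, habs y2, hbabs y1, hbabs y2]
    rcases le_total |y1| |y2| with h | h
    · exact mul_nonneg_of_nonpos_of_nonpos
        (sub_nonpos.2 (aux_abs_le hc hs (by simpa using h)))
        (sub_nonpos.2 (hmono _ _ (abs_nonneg _) h))
    · exact mul_nonneg
        (sub_nonneg.2 (aux_abs_le hc hs (by simpa using h)))
        (sub_nonneg.2 (hmono _ _ (abs_nonneg _) h))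
  have r2 : (fun y => L y * rexp (L y) * C y) = fun y => L y * (rexp (L y) * C y) := by
    ext y; ring
  have r3 : (fun y => deriv L y * rexp (L y) * (tanh (x * y / v) * C y)) =
      fun y => (deriv L y * tanh (x * y / v)) * (rexp (L y) * C y) := by
    ext y; ring
  have r4 : (fun y => L y * deriv L y * rexp (L y) * (tanh (x * y / v) * C y)) =
      fun y => L y * (deriv L y * tanh (x * y / v)) * (rexp (L y) * C y) := by
    ext y; ring
  have key := aux_cheb (a := L) (b := fun y => deriv L y * tanh (x * y / v))
    (w := fun y => rexp (L y) * C y) (fun y => mul_nonneg (exp_pos _).le (hC0 y)) hab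
    j1 (r2 ▸ j2) (r3 ▸ j3) (r4 ▸ j4)
  rw [← r2, ← r3, ← r4] at key
  change (∫ y, L y * rexp (L y) * C y) = _ at e2
  change (∫ y, rexp (L y) * C y) = _ at e1
  rw [e2, e3, e4, e1] at key
  linarith

/-- Lemma 2(f): `f(x) = E[V(x,z) log V(x,z)]` is nonnegative,
even, and nondecreasing on `[0,∞)`, where `V` is the Gibbs change of density
associated with a convex symmetric nonnegative `Φ̃`. -/
theorem gibbs_entropy_in_C
    (Φ : ℝ → ℝ) (hΦsmooth : ContDiff ℝ (⊤ : ℕ∞) Φ)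
    (hΦconv : ConvexOn ℝ Set.univ Φ)
    (hΦsymm : ∀ x, Φ (-x) = Φ x) (hΦnonneg : ∀ x, 0 ≤ Φ x)
    (σ2 : NNReal) (hσ2 : 0 < σ2) (m : ℝ) (hm : 0 < m)
    (ψ : ℝ → ℝ)
    (hψ : ∀ x, ψ x = (1 / m) *
      Real.log (∫ z, Real.exp (m * Φ (x + z)) ∂(gaussianReal 0 σ2)))
    (V : ℝ → ℝ → ℝ)
    (hV : ∀ x z, V x z = Real.exp (m * (Φ (x + z) - ψ x)))
    (hint : ∀ x, Integrable (fun z => V x z * Real.log (V x z)) (gaussianReal 0 σ2))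
    (f : ℝ → ℝ)
    (hf : ∀ x, f x = ∫ z, V x z * Real.log (V x z) ∂(gaussianReal 0 σ2)) :
    (∀ x, 0 ≤ f x) ∧ (∀ x, f (-x) = f x) ∧ MonotoneOn f (Set.Ici (0 : ℝ)) := by
  have hv : σ2 ≠ 0 := hσ2.ne'
  set γ := gaussianReal 0 σ2 with hγ
  obtain ⟨L, hL⟩ : ∃ L : ℝ → ℝ, L = fun y => m * Φ y := ⟨_, rfl⟩
  have hLy : ∀ y, m * Φ y = L y := fun y => by rw [hL]
  have hLsm : ContDiff ℝ 1 L := by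
    rw [hL]; exact contDiff_const.mul (hΦsmooth.of_le (by exact_mod_cast le_top))
  have hLc : ConvexOn ℝ Set.univ L := by
    rw [hL]; exact hΦconv.smul hm.le
  have hLs : ∀ y, L (-y) = L y := fun y => by simp [hL, hΦsymm]
  have hL0 : ∀ y, 0 ≤ L y := fun y => by rw [hL]; exact mul_nonneg hm.le (hΦnonneg y)
  have hLd : Differentiable ℝ L := hLsm.differentiable (by norm_num)
  have hLcont : Continuous L := hLsm.continuous
  obtain ⟨N, hN⟩ : ∃ N : ℝ → ℝ, N = fun x => ∫ z, rexp (L (x + z)) ∂γ := ⟨_, rfl⟩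
  have hmψ : ∀ x, m * ψ x = log (N x) := fun x => by
    rw [hψ, hN]; simp only [hLy]; field_simp
  have hlogV : ∀ x z, log (V x z) = L (x + z) - log (N x) := fun x z => by
    rw [hV, log_exp, mul_sub, hLy, hmψ]
  have hVe : ∀ x z, V x z = rexp (L (x + z)) * rexp (-log (N x)) := fun x z => by
    rw [hV, mul_sub, hLy, hmψ, ← Real.exp_add]; ring_nf
  have hVpos : ∀ x z, 0 < V x z := fun x z => by rw [hV]; exact exp_pos _
  have hVcont : ∀ x, Continuous (V x) := fun x => by
    have : V x = fun z => rexp (L (x + z)) * rexp (-log (N x)) := funext (hVe x)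
    rw [this]; fun_prop
  have hVint : ∀ x, Integrable (V x) γ := fun x => by
    refine Integrable.mono' ((integrable_const (rexp 1)).add (hint x).norm)
      (hVcont x).aestronglyMeasurable (Filter.Eventually.of_forall fun z => ?_)
    simp only [Pi.add_apply, Real.norm_eq_abs]
    rw [abs_of_pos (hVpos x z)]
    have h1 := abs_nonneg (V x z * log (V x z))
    by_cases h : V x z ≤ rexp 1
    · linarith
    · have h2 : 1 ≤ log (V x z) := by
        rw [le_log_iff_exp_le (hVpos x z)]; exact (not_le.1 h).le
      have h3 := le_abs_self (V x z * log (V x z))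
      have h4 := exp_pos 1
      nlinarith [hVpos x z]
  have hGint : ∀ x, Integrable (fun z => rexp (L (x + z))) γ := fun x => by
    have := (hVint x).mul_const (rexp (log (N x)))
    refine this.congr (Filter.Eventually.of_forall fun z => ?_)
    simp only [hVe]
    rw [mul_assoc, ← Real.exp_add]; simp
  have hNpos : ∀ x, 0 < N x := fun x => by
    rw [hN]; exact integral_exp_pos (hGint x)
  have hV' : ∀ x z, V x z = rexp (L (x + z)) / N x := fun x z => by
    rw [hVe, Real.exp_neg, exp_log (hNpos x)]; rfl
  have hKint : ∀ x, Integrable (fun z => L (x + z) * rexp (L (x + z))) γ := fun x => by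
    have := ((hint x).mul_const (N x)).add ((hGint x).const_mul (log (N x)))
    refine this.congr (Filter.Eventually.of_forall fun z => ?_)
    have := (hNpos x).ne'
    simp only [Pi.add_apply, hlogV]
    rw [hV']; field_simp; ring
  obtain ⟨S, hS⟩ : ∃ S : ℝ → ℝ, S = fun x => ∫ z, L (x + z) * rexp (L (x + z)) ∂γ := ⟨_, rfl⟩
  have hfx : ∀ x, f x = S x / N x - log (N x) := fun x => by
    have hn := (hNpos x).ne'
    have e : ∀ z, V x z * log (V x z) = (1 / N x) * (L (x + z) * rexp (L (x + z)))
        - (log (N x) / N x) * rexp (L (x + z)) := fun z => by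
      rw [hlogV, hV']; field_simp
    rw [hf]
    simp only [e]
    rw [integral_sub ((hKint x).const_mul _) ((hGint x).const_mul _), integral_const_mul,
      integral_const_mul]
    have e1 : (∫ z, rexp (L (x + z)) ∂γ) = N x := by rw [hN]
    have e2 : (∫ z, L (x + z) * rexp (L (x + z)) ∂γ) = S x := by rw [hS]
    rw [e1, e2]; field_simp
  have hflip : ∀ (A : ℝ → ℝ), (∀ y, A (-y) = A y) → ∀ x,
      ∫ z, A (-x + z) ∂γ = ∫ z, A (x + z) ∂γ := by
    intro A hA x
    have h1 : γ.map (fun z => -z) = γ := by rw [hγ, gaussianReal_map_neg]; simp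
    have h2 := (MeasurableEquiv.neg ℝ).measurableEmbedding.integral_map (μ := γ) (fun z => A (-x + z))
    have h1' : γ.map (MeasurableEquiv.neg ℝ) = γ := h1
    rw [h1'] at h2
    rw [h2]
    refine integral_congr_ae (Filter.Eventually.of_forall fun z => ?_)
    change A (-x + -z) = A (x + z)
    rw [← hA]; congr 1; ring
  refine ⟨fun x => ?_, fun x => ?_, ?_⟩
  · have hV1 : ∫ z, V x z ∂γ = 1 := by
      simp only [hV']
      rw [integral_div]
      have e1 : (∫ z, rexp (L (x + z)) ∂γ) = N x := by rw [hN]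
      rw [e1, div_self (hNpos x).ne']
    have h : ∫ z, (V x z - 1) ∂γ ≤ ∫ z, V x z * log (V x z) ∂γ := by
      refine integral_mono ((hVint x).sub (integrable_const 1)) (hint x) fun z => ?_
      have h1 := one_sub_inv_le_log_of_pos (hVpos x z)
      have h2 := mul_le_mul_of_nonneg_left h1 (hVpos x z).le
      rw [mul_sub, mul_inv_cancel₀ (hVpos x z).ne'] at h2
      simpa using h2
    rw [integral_sub (hVint x) (integrable_const 1), hV1] at h
    rw [hf]
    simpa using h
  · rw [hfx, hfx]
    have e1 : N (-x) = N x := by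
      rw [hN]; exact hflip (fun y => rexp (L y)) (fun y => by simp [hLs]) x
    have e2 : S (-x) = S x := by
      rw [hS]; exact hflip (fun y => L y * rexp (L y)) (fun y => by simp [hLs]) x
    rw [e1, e2]
  · have hGc : ConvexOn ℝ Set.univ (fun y => rexp (L y)) := by
      refine ConvexOn.comp (g := rexp) (f := L) ?_ hLc (exp_monotone.monotoneOn _)
      exact convexOn_exp.subset (Set.subset_univ _)
        (by
          have := hLcont
          exact ((isPreconnected_univ.image L hLcont.continuousOn)).ordConnected.convex)
    have hKc : ConvexOn ℝ Set.univ (fun y => L y * rexp (L y)) := by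
      refine ConvexOn.mul hLc hGc (fun y _ => hL0 y) (fun y _ => (exp_pos _).le) ?_
      intro i _ j _ h
      exact (exp_lt_exp.1 h).le
    have hGsm : ContDiff ℝ 1 (fun y => rexp (L y)) := hLsm.exp
    have hKsm : ContDiff ℝ 1 (fun y => L y * rexp (L y)) := hLsm.mul hLsm.exp
    have dG : ∀ y, deriv (fun y => rexp (L y)) y = deriv L y * rexp (L y) := fun y => by
      rw [((hLd y).hasDerivAt.exp).deriv]; ring
    have dK : ∀ y, deriv (fun y => L y * rexp (L y)) y =
        L y * deriv L y * rexp (L y) + deriv L y * rexp (L y) := fun y => by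
      refine ((hLd y).hasDerivAt.mul (hLd y).hasDerivAt.exp).deriv.trans ?_
      ring
    have HG := aux_hasDeriv hGsm hGc (fun y => by simp [hLs]) (fun y => (exp_pos _).le) γ hGint
    have HK := aux_hasDeriv hKsm hKc (fun y => by simp [hLs])
      (fun y => mul_nonneg (hL0 y) (exp_pos _).le) γ hKint
    simp only [dG] at HG
    simp only [dK] at HK
    have hI4 : ∀ x, Integrable (fun z => L (x + z) * deriv L (x + z) * rexp (L (x + z))) γ :=
      fun x => by
        refine ((HK x).1.sub (HG x).1).congr (Filter.Eventually.of_forall fun z => ?_)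
        simp
    have HN : ∀ x, HasDerivAt N (∫ z, deriv L (x + z) * rexp (L (x + z)) ∂γ) x := fun x => by
      rw [hN]; exact (HG x).2
    have HS : ∀ x, HasDerivAt S ((∫ z, L (x + z) * deriv L (x + z) * rexp (L (x + z)) ∂γ) +
        ∫ z, deriv L (x + z) * rexp (L (x + z)) ∂γ) x := fun x => by
      rw [hS, ← integral_add (hI4 x) (HG x).1]; exact (HK x).2
    have Hf : ∀ x, HasDerivAt f _ x := fun x => by
      rw [show f = fun x => S x / N x - log (N x) from funext hfx]
      exact ((HS x).div (HN x) (hNpos x).ne').sub ((HN x).log (hNpos x).ne')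
    refine monotoneOn_of_deriv_nonneg (convex_Ici 0)
      (fun x _ => (Hf x).continuousAt.continuousWithinAt)
      (fun x _ => (Hf x).differentiableAt.differentiableWithinAt) ?_
    intro x hx
    rw [interior_Ici] at hx
    rw [(Hf x).deriv]
    have hcov := aux_cov hv hLd hLc hLs (le_of_lt hx) (hGint x) (hKint x) (HG x).1 (hI4 x)
    have e1 : (∫ z, rexp (L (x + z)) ∂γ) = N x := by rw [hN]
    have e2 : (∫ z, L (x + z) * rexp (L (x + z)) ∂γ) = S x := by rw [hS]
    rw [← hγ, e1, e2] at hcov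
    generalize (∫ z, L (x + z) * deriv L (x + z) * rexp (L (x + z)) ∂γ) = P at *
    generalize (∫ z, deriv L (x + z) * rexp (L (x + z)) ∂γ) = Q at *
    have hn := hNpos x
    have : ((P + Q) * N x - S x * Q) / N x ^ 2 - Q / N x = (P * N x - S x * Q) / N x ^ 2 := by
      field_simp; ring
    rw [this]
    exact div_nonneg (by linarith) (by positivity)
end

section
/- For η = Φ(|h⃗ + z⃗|) with z⃗ a standard Gaussian vector in ℝⁿ and h⃗ ∈ ℝⁿ fixed, the function m ↦ (1/m) log E[exp(m η)] is convex on (0, ∞). -/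
open MeasureTheory ProbabilityTheory Real

namespace ParisiAux
open Filter Topology Set

lemma cdf_hasDerivAt {p : ℝ → ℝ} (hc : Continuous p) (hi : Integrable p) (x : ℝ) :
    HasDerivAt (fun x => ∫ y in Iic x, p y) (p x) x := by
  have h1 : ∀ x, ∫ y in Iic x, p y = (∫ y in Iic (0:ℝ), p y) + ∫ y in (0:ℝ)..x, p y := by
    intro x
    rw [← intervalIntegral.integral_Iic_sub_Iic hi.integrableOn hi.integrableOn]; ring
  rw [funext h1]
  exact (intervalIntegral.integral_hasDerivAt_right (hc.intervalIntegrable _ _)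
    (hc.stronglyMeasurableAtFilter _ _) hc.continuousAt).const_add _

lemma cdf_strictMono {p : ℝ → ℝ} (hc : Continuous p) (hi : Integrable p) (hp : ∀ x, 0 < p x) :
    StrictMono (fun x => ∫ y in Iic x, p y) := by
  apply strictMono_of_deriv_pos
  intro x
  rw [(cdf_hasDerivAt hc hi x).deriv]; exact hp x

lemma cdf_atTop {p : ℝ → ℝ} (hi : Integrable p) (h1 : ∫ x, p x = 1) :
    Tendsto (fun x => ∫ y in Iic x, p y) atTop (𝓝 1) := by
  rw [← h1]
  exact (aecover_Iic tendsto_id).integral_tendsto_of_countably_generated hi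

lemma cdf_add {p : ℝ → ℝ} (hi : Integrable p) (h1 : ∫ x, p x = 1) (x : ℝ) :
    (∫ y in Iic x, p y) + ∫ y in Ioi x, p y = 1 := by
  rw [← h1]
  simpa using integral_add_compl (measurableSet_Iic (a := x)) hi

lemma cdf_atBot {p : ℝ → ℝ} (hi : Integrable p) (h1 : ∫ x, p x = 1) :
    Tendsto (fun x => ∫ y in Iic x, p y) atBot (𝓝 0) := by
  have h2 : ∀ x, ∫ y in Iic x, p y = 1 - ∫ y in Ioi x, p y := fun x => by
    have := cdf_add hi h1 x
    linarith
  simp_rw [h2]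
  have := (aecover_Ioi (μ := (volume : Measure ℝ)) (tendsto_id (α := ℝ) (x := atBot))).integral_tendsto_of_countably_generated hi
  rw [h1] at this
  simpa using this.const_sub 1

lemma cdf_mem {p : ℝ → ℝ} (hc : Continuous p) (hi : Integrable p) (hp : ∀ x, 0 < p x)
    (h1 : ∫ x, p x = 1) (x : ℝ) : (∫ y in Iic x, p y) ∈ Ioo (0:ℝ) 1 := by
  have hm := cdf_strictMono hc hi hp
  constructor
  · exact lt_of_le_of_lt (hm.monotone.le_of_tendsto (cdf_atBot hi h1) (x - 1)) (hm (by linarith))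
  · exact lt_of_lt_of_le (hm (show x < x + 1 by linarith))
      (hm.monotone.ge_of_tendsto (cdf_atTop hi h1) (x + 1))

lemma cdf_surj {p : ℝ → ℝ} (hc : Continuous p) (hi : Integrable p)
    (h1 : ∫ x, p x = 1) {y : ℝ} (hy : y ∈ Ioo (0:ℝ) 1) : ∃ x, (∫ y in Iic x, p y) = y := by
  have hcont : Continuous (fun x => ∫ y in Iic x, p y) :=
    continuous_iff_continuousAt.2 fun x => (cdf_hasDerivAt hc hi x).continuousAt
  obtain ⟨a, ha⟩ := ((cdf_atBot hi h1).eventually (gt_mem_nhds hy.1)).exists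
  obtain ⟨b, hb⟩ := ((cdf_atTop hi h1).eventually (lt_mem_nhds hy.2)).exists
  exact mem_range_of_exists_le_of_exists_ge hcont ⟨a, ha.le⟩ ⟨b, hb.le⟩

lemma exists_transport {p q : ℝ → ℝ} (hpc : Continuous p) (hpi : Integrable p)
    (hp : ∀ x, 0 < p x) (hp1 : ∫ x, p x = 1) (hqc : Continuous q) (hqi : Integrable q)
    (hq : ∀ x, 0 < q x) (hq1 : ∫ x, q x = 1) :
    ∃ R : ℝ → ℝ, (∀ x, (∫ y in Iic (R x), p y) = ∫ y in Iic x, q y) ∧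
      ∀ x, HasDerivAt R (q x / p (R x)) x := by
  have hex : ∀ y : ℝ, ∃ x, y ∈ Ioo (0:ℝ) 1 → (∫ y in Iic x, p y) = y := by
    intro y
    by_cases hy : y ∈ Ioo (0:ℝ) 1
    · obtain ⟨x, hx⟩ := cdf_surj hpc hpi hp1 hy
      exact ⟨x, fun _ => hx⟩
    · exact ⟨0, fun h => absurd h hy⟩
  choose g hg using hex
  have hm := cdf_strictMono hpc hpi hp
  have hmem := fun x => cdf_mem hqc hqi hq hq1 x
  refine ⟨fun x => g (∫ y in Iic x, q y), fun x => hg _ (hmem x), fun x => ?_⟩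
  set a := ∫ y in Iic x, q y with ha
  have hna : Ioo (0:ℝ) 1 ∈ 𝓝 a := Ioo_mem_nhds (hmem x).1 (hmem x).2
  have hgm : StrictMonoOn g (Ioo 0 1) := by
    intro u hu v hv huv
    rw [← hm.lt_iff_lt]
    simpa only [hg u hu, hg v hv] using huv
  have himg : g '' (Ioo 0 1) = univ := by
    refine eq_univ_of_forall fun z => ⟨_, cdf_mem hpc hpi hp hp1 z, ?_⟩
    exact hm.injective (hg _ (cdf_mem hpc hpi hp hp1 z))
  have hgc : ContinuousAt g a := hgm.continuousAt_of_image_mem_nhds hna (by rw [himg]; exact univ_mem)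
  have hd : HasDerivAt g (p (g a))⁻¹ a :=
    HasDerivAt.of_local_left_inverse hgc (cdf_hasDerivAt hpc hpi (g a)) (hp _).ne'
      (by filter_upwards [hna] with y hy using hg y hy)
  have := hd.comp x (cdf_hasDerivAt hqc hqi x)
  rw [div_eq_inv_mul]
  exact this

lemma log_convex_aux {m0 m1 w0 w1 s : ℝ} (h0 : 0 < m0) (h1 : 0 < m1) (hw0 : 0 ≤ w0) (hw1 : 0 ≤ w1)
    (hw : w0 + w1 = 1) (hs : 0 ≤ s) :
    Real.log (1 + (w0 * m0 + w1 * m1) * s) / (w0 * m0 + w1 * m1) ≤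
      w0 * (Real.log (1 + m0 * s) / m0) + w1 * (Real.log (1 + m1 * s) / m1) := by
  have key : ∀ m : ℝ, 0 < m → Real.log (1 + m * s) / m = ∫ u in (0:ℝ)..s, (1 + m * u)⁻¹ := by
    intro m hm
    have hpos : ∀ u ∈ uIcc 0 s, 0 < 1 + m * u := by
      intro u hu
      rw [uIcc_of_le hs] at hu
      have := mul_nonneg hm.le hu.1
      linarith
    rw [intervalIntegral.integral_eq_sub_of_hasDerivAt (f := fun u => Real.log (1 + m * u) / m)]
    · simp
    · intro u hu
      have h := ((((hasDerivAt_id u).const_mul m).const_add 1).log (hpos u hu).ne').div_const m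
      have e : m * 1 / (1 + m * u) / m = (1 + m * u)⁻¹ := by
        field_simp
      rw [← e]
      exact h
    · apply ContinuousOn.intervalIntegrable
      apply ContinuousOn.inv₀ (by fun_prop)
      exact fun u hu => (hpos u hu).ne'
  have hm : 0 < w0 * m0 + w1 * m1 := by
    rcases hw0.eq_or_lt with h | h
    · subst h
      have : w1 = 1 := by linarith
      subst this; simpa using h1
    · have := mul_pos h h0
      have := mul_nonneg hw1 h1.le
      linarith
  have hint : ∀ m : ℝ, 0 < m → IntervalIntegrable (fun u => (1 + m * u)⁻¹) volume 0 s := by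
    intro m hm
    apply ContinuousOn.intervalIntegrable
    apply ContinuousOn.inv₀ (by fun_prop)
    intro u hu
    rw [uIcc_of_le hs] at hu
    have := mul_nonneg hm.le hu.1
    linarith
  rw [key _ hm, key _ h0, key _ h1, ← intervalIntegral.integral_const_mul,
    ← intervalIntegral.integral_const_mul, ← intervalIntegral.integral_add
      ((hint _ h0).const_mul _) ((hint _ h1).const_mul _)]
  apply intervalIntegral.integral_mono_on hs (hint _ hm)
    (((hint _ h0).const_mul _).add ((hint _ h1).const_mul _))
  intro u hu
  have hc := (convexOn_zpow (𝕜 := ℝ) (-1)).2 (x := 1 + m0 * u) (y := 1 + m1 * u) 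
    (by have := mul_nonneg h0.le hu.1; simp; linarith) (by have := mul_nonneg h1.le hu.1; simp; linarith) hw0 hw1 hw
  simp only [smul_eq_mul, zpow_neg_one] at hc
  refine le_trans (le_of_eq ?_) hc
  congr 1
  linear_combination (-1 : ℝ) * hw

/-- contraction -/
lemma dens_le {q : ℝ → ℝ} {φ : ℝ → ℝ} (hqi : Integrable q) (hφi : Integrable φ)
    (hq : ∀ x, 0 < q x) (hφ : ∀ x, 0 < φ x) (hq1 : ∫ x, q x = 1) (hφ1 : ∫ x, φ x = 1)
    (x0 : ℝ) (heq : ∫ x in Iic x0, q x = ∫ x in Iic x0, φ x)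
    (hconv : ConvexOn ℝ univ (fun x => Real.log (q x) - Real.log (φ x))) : q x0 ≤ φ x0 := by
  by_contra hlt
  push Not at hlt
  have heq2 : ∫ x in Ioi x0, q x = ∫ x in Ioi x0, φ x := by
    have := cdf_add hqi hq1 x0
    have := cdf_add hφi hφ1 x0
    linarith
  have hpos0 : 0 < Real.log (q x0) - Real.log (φ x0) := by
    have := Real.log_lt_log (hφ x0) hlt; linarith
  have hstrict : ∀ s : Set ℝ, MeasurableSet s → 0 < volume s →
      (∀ x ∈ s, φ x < q x) → ∫ x in s, q x = ∫ x in s, φ x → False := by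
    intro s hs hv hlt heq
    have h0 : ∫ x in s, (q x - φ x) = 0 := by
      rw [integral_sub hqi.integrableOn hφi.integrableOn, heq, sub_self]
    have : 0 < ∫ x in s, (q x - φ x) := by
      rw [setIntegral_pos_iff_support_of_nonneg_ae]
      · refine lt_of_lt_of_le hv (measure_mono fun x hx => ⟨?_, hx⟩)
        have := hlt x hx
        simp only [Function.mem_support]; linarith
      · filter_upwards [ae_restrict_mem hs] with x hx
        have := hlt x hx
        simp only [Pi.zero_apply]; linarith
      · exact (hqi.sub hφi).integrableOn
    linarith
  have hlog : ∀ x, 0 < Real.log (q x) - Real.log (φ x) → φ x < q x := by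
    intro x hx
    exact (Real.log_lt_log_iff (hφ x) (hq x)).1 (by linarith)
  by_cases hex : ∃ y < x0, Real.log (q y) - Real.log (φ y) ≤ 0
  · obtain ⟨y, hy, hky⟩ := hex
    refine hstrict (Ioi x0) measurableSet_Ioi (by simp) (fun x hx => hlog x ?_) heq2
    by_contra hle
    push Not at hle
    have hx : x0 < x := hx
    have := hconv.le_on_segment (mem_univ y) (mem_univ x) 
      (show x0 ∈ segment ℝ y x by rw [segment_eq_Icc (by linarith)]; exact ⟨hy.le, hx.le⟩)
    have h2 := max_le hky hle
    linarith
  · push Not at hex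
    refine hstrict (Iic x0) measurableSet_Iic (by simp) (fun x hx => ?_) heq
    rcases (show x ≤ x0 from hx).eq_or_lt with h | h
    · subst h; exact hlt
    · exact hlog x (hex x h)


lemma pointwise_aux {m0 m1 w0 w1 m f f0 f1 x R r lq lZ κ : ℝ} (h0 : 0 < m0) (h1 : 0 < m1)
    (hw0 : 0 ≤ w0) (hw1 : 0 ≤ w1) (hw : w0 + w1 = 1) (hm : m = w0 * m0 + w1 * m1) (hmpos : 0 < m)
    (hr : 0 < r) (hr1 : r ≤ 1) (hf : f ≤ w0 * f0 + w1 * f1)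
    (hlq : lq = m * f + (-κ - x ^ 2 / 2) - lZ) (hlr : Real.log r = lq - (-κ - R ^ 2 / 2)) :
    lZ / m ≤
      w0 / m0 * (m0 * f0 + (-κ - ((m0 / m) * x + (1 - m0 / m) * R) ^ 2 / 2)
        + Real.log (m0 / m + (1 - m0 / m) * r) - lq) +
      w1 / m1 * (m1 * f1 + (-κ - ((m1 / m) * x + (1 - m1 / m) * R) ^ 2 / 2)
        + Real.log (m1 / m + (1 - m1 / m) * r) - lq) := by
  set s := (1 - r) / (m * r) with hs
  have hs0 : 0 ≤ s := div_nonneg (by linarith) (by positivity)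
  have hlog : ∀ k : ℝ, 0 < k → Real.log (k / m + (1 - k / m) * r) =
      Real.log r + Real.log (1 + k * s) := by
    intro k hk
    have : 0 < 1 + k * s := by positivity
    rw [← Real.log_mul hr.ne' this.ne']
    congr 1
    rw [hs]; field_simp; ring
  have hl := log_convex_aux h0 h1 hw0 hw1 hw hs0
  rw [← hm] at hl
  have hms : Real.log (1 + m * s) = - Real.log r := by
    rw [← Real.log_inv]; congr 1
    rw [hs]; field_simp; ring
  rw [hlog m0 h0, hlog m1 h1]
  rw [hms] at hl
  obtain ⟨α, hα⟩ : ∃ α, α = w0 / m0 := ⟨_, rfl⟩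
  obtain ⟨β, hβ⟩ : ∃ α, α = w1 / m1 := ⟨_, rfl⟩
  obtain ⟨ν, hν⟩ : ∃ ν, ν = 1 / m := ⟨_, rfl⟩
  have hα' : w0 = α * m0 := by rw [hα]; field_simp
  have hβ' : w1 = β * m1 := by rw [hβ]; field_simp
  have hν' : ν * m = 1 := by rw [hν]; field_simp
  have e0 : w0 * (Real.log (1 + m0 * s) / m0) = α * Real.log (1 + m0 * s) := by rw [hα]; ring
  have e1 : w1 * (Real.log (1 + m1 * s) / m1) = β * Real.log (1 + m1 * s) := by rw [hβ]; ring
  have e2 : - Real.log r / m = - ν * Real.log r := by rw [hν]; ring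
  have e3 : lZ / m = ν * lZ := by rw [hν]; ring
  have e4 : m0 / m = ν * m0 := by rw [hν]; ring
  have e5 : m1 / m = ν * m1 := by rw [hν]; ring
  rw [e0, e1, e2] at hl
  rw [← hα, ← hβ, e3, e4, e5]
  have hsq : α * ((ν * m0 * x + (1 - ν * m0) * R) ^ 2) + β * ((ν * m1 * x + (1 - ν * m1) * R) ^ 2)
      = (α + β - ν) * R ^ 2 + ν * x ^ 2 := by
    rw [hα', hβ'] at hw hm
    have h2 : ν * (α * m0 * m0 + β * m1 * m1) = 1 := by rw [← hm]; exact hν'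
    linear_combination (2 * ν * R * (x - R)) * hw + ν * (x - R) ^ 2 * h2
  have hlZ : ν * lZ = f + ν * (-κ - x ^ 2 / 2) - ν * lq := by
    rw [hlq]; linear_combination f * hν'
  rw [hα', hβ'] at hf
  rw [hlZ]
  rw [hlr] at hl ⊢
  linear_combination hf + hl + hsq / 2

lemma one_dim {m0 m1 w0 w1 m : ℝ} (h0 : 0 < m0) (h1 : 0 < m1)
    (hw0 : 0 ≤ w0) (hw1 : 0 ≤ w1) (hw : w0 + w1 = 1) (hm : m = w0 * m0 + w1 * m1)
    {F F0 F1 : ℝ → ℝ} (hF : ConvexOn ℝ univ F)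
    (hle : ∀ x0 x1, F (w0 * x0 + w1 * x1) ≤ w0 * F0 x0 + w1 * F1 x1)
    (hi : Integrable (fun z => Real.exp (m * F z)) (gaussianReal 0 1))
    (hi0 : Integrable (fun z => Real.exp (m0 * F0 z)) (gaussianReal 0 1))
    (hi1 : Integrable (fun z => Real.exp (m1 * F1 z)) (gaussianReal 0 1)) :
    (1 / m) * Real.log (∫ z, Real.exp (m * F z) ∂gaussianReal 0 1) ≤
      w0 * ((1 / m0) * Real.log (∫ z, Real.exp (m0 * F0 z) ∂gaussianReal 0 1)) +
      w1 * ((1 / m1) * Real.log (∫ z, Real.exp (m1 * F1 z) ∂gaussianReal 0 1)) := by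
  have hmpos : 0 < m := by
    rw [hm]
    rcases hw0.eq_or_lt with h | h
    · subst h
      have : w1 = 1 := by linarith
      subst this; simpa using h1
    · have := mul_pos h h0
      have := mul_nonneg hw1 h1.le
      linarith
  set φ : ℝ → ℝ := gaussianPDFReal 0 1 with hφ
  have hφpos : ∀ x, 0 < φ x := fun x => gaussianPDFReal_pos 0 1 x one_ne_zero
  have hφi : Integrable φ := integrable_gaussianPDFReal 0 1
  have hφ1 : ∫ x, φ x = 1 := integral_gaussianPDFReal_eq_one 0 one_ne_zero
  have hφd : φ = fun x => (√(2 * π))⁻¹ * Real.exp (- x ^ 2 / 2) := by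
    funext x; simp [hφ, gaussianPDFReal]
  have hφc : Continuous φ := by rw [hφd]; fun_prop
  obtain ⟨κ, hκ⟩ : ∃ κ, ∀ x, Real.log (φ x) = -κ - x ^ 2 / 2 := by
    refine ⟨Real.log (√(2 * π)), fun x => ?_⟩
    have : (0:ℝ) < √(2 * π) := by positivity
    rw [hφd]
    simp only
    rw [Real.log_mul (by positivity) (by positivity), Real.log_exp, Real.log_inv]; ring
  have hconvI : ∀ {f : ℝ → ℝ}, Integrable f (gaussianReal 0 1) → Integrable (fun x => φ x * f x) := by
    intro f hf
    rw [gaussianReal_of_var_ne_zero _ one_ne_zero,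
      integrable_withDensity_iff_integrable_smul' (measurable_gaussianPDF _ _)
      (ae_of_all _ fun _ ↦ gaussianPDF_lt_top)] at hf
    simpa using hf
  have hconvE : ∀ f : ℝ → ℝ, ∫ z, f z ∂gaussianReal 0 1 = ∫ x, φ x * f x := by
    intro f
    rw [integral_gaussianReal_eq_integral_smul one_ne_zero]; rfl
  have hI0 := integral_exp_pos hi0
  have hI1 := integral_exp_pos hi1
  have hZ := integral_exp_pos hi
  set I0 := ∫ z, Real.exp (m0 * F0 z) ∂gaussianReal 0 1 with hI0d
  set I1 := ∫ z, Real.exp (m1 * F1 z) ∂gaussianReal 0 1 with hI1d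
  set Z := ∫ z, Real.exp (m * F z) ∂gaussianReal 0 1 with hZd
  have hFc : Continuous F := by
    rw [← continuousOn_univ]; exact hF.continuousOn isOpen_univ
  set q : ℝ → ℝ := fun x => φ x * Real.exp (m * F x) / Z with hq
  have hqpos : ∀ x, 0 < q x := fun x => div_pos (mul_pos (hφpos x) (Real.exp_pos _)) hZ
  have hqc : Continuous q := by rw [hq]; fun_prop
  have hqi : Integrable q := (hconvI hi).div_const Z
  have hq1 : ∫ x, q x = 1 := by
    rw [hq, integral_div, ← hconvE, ← hZd, div_self hZ.ne']
  have hlq : ∀ x, Real.log (q x) = m * F x + (-κ - x ^ 2 / 2) - Real.log Z := by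
    intro x
    rw [hq]; simp only
    rw [Real.log_div (mul_pos (hφpos x) (Real.exp_pos _)).ne' hZ.ne',
      Real.log_mul (hφpos x).ne' (Real.exp_pos _).ne', Real.log_exp, hκ]; ring
  obtain ⟨R, hRC, hRd⟩ := exists_transport hφc hφi hφpos hφ1 hqc hqi hqpos hq1
  have hr1 : ∀ x, q x / φ (R x) ≤ 1 := by
    intro x0
    rw [div_le_one (hφpos _)]
    obtain ⟨s, hs⟩ : ∃ s, s = x0 - R x0 := ⟨_, rfl⟩
    have hRs : R x0 = x0 - s := by rw [hs]; ring
    have := dens_le (φ := fun x => φ (x - s)) hqi (hφi.comp_sub_right s) hqpos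
      (fun x => hφpos _) hq1 (by rw [integral_sub_right_eq_self φ s]; exact hφ1) x0 ?_ ?_
    · rw [hRs]; exact this
    · rw [← hRC x0, hRs]
      rw [← integral_indicator measurableSet_Iic, ← integral_indicator measurableSet_Iic,
        ← integral_sub_right_eq_self _ s]
      congr 1
      funext x
      simp [indicator]
    · have : (fun x => Real.log (q x) - Real.log (φ (x - s))) =
        fun x => m * F x + ((- s) * x + (s ^ 2 / 2 - Real.log Z)) := by
        funext x
        rw [hlq, hκ]; ring
      rw [this]
      refine (hF.smul hmpos.le).add ?_
      refine ⟨convex_univ, fun x _ y _ a b _ _ hab => le_of_eq ?_⟩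
      simp only [smul_eq_mul]
      linear_combination (-(s ^ 2 / 2 - Real.log Z)) * hab
  have hrpos : ∀ x, 0 < q x / φ (R x) := fun x => div_pos (hqpos x) (hφpos _)
  -- change of variables
  have hcv : ∀ (k : ℝ) (G : ℝ → ℝ), 0 < k → Integrable (fun z => Real.exp (k * G z)) (gaussianReal 0 1) →
      (∀ x, 0 < k / m + (1 - k / m) * (q x / φ (R x))) ∧
      Integrable (fun x => (k / m + (1 - k / m) * (q x / φ (R x))) *
        (φ (k / m * x + (1 - k / m) * R x) * Real.exp (k * G (k / m * x + (1 - k / m) * R x)))) ∧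
      ∫ x, (k / m + (1 - k / m) * (q x / φ (R x))) *
        (φ (k / m * x + (1 - k / m) * R x) * Real.exp (k * G (k / m * x + (1 - k / m) * R x)))
        ≤ ∫ z, Real.exp (k * G z) ∂gaussianReal 0 1 := by
    intro k G hk hG
    have hpos : ∀ x, 0 < k / m + (1 - k / m) * (q x / φ (R x)) := by
      intro x
      have h1 := hr1 x
      have h2 := hrpos x
      have h3 : 0 < k / m := by positivity
      generalize q x / φ (R x) = r at *
      generalize k / m = a at *
      have : a + (1 - a) * r = a * (1 - r) + r := by ring
      rw [this]
      have := mul_nonneg h3.le (sub_nonneg.2 h1)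
      linarith
    have hd : ∀ x, HasDerivAt (fun x => k / m * x + (1 - k / m) * R x)
        (k / m + (1 - k / m) * (q x / φ (R x))) x := by
      intro x
      have := ((hasDerivAt_id x).const_mul (k / m)).add ((hRd x).const_mul (1 - k / m))
      rw [mul_one] at this
      exact this
    have hmono : StrictMono (fun x => k / m * x + (1 - k / m) * R x) := by
      apply strictMono_of_deriv_pos
      intro x
      rw [(hd x).deriv]; exact hpos x
    have hGi := hconvI hG
    refine ⟨hpos, ?_, ?_⟩
    · have := (integrableOn_image_iff_integrableOn_abs_deriv_smul MeasurableSet.univ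
        (fun x _ => (hd x).hasDerivWithinAt) hmono.injective.injOn _).1 
        (hGi.integrableOn (s := (fun x => k / m * x + (1 - k / m) * R x) '' univ))
      rw [integrableOn_univ] at this
      refine this.congr (ae_of_all _ fun x => ?_)
      simp only [abs_of_pos (hpos x), smul_eq_mul]
    · have := integral_image_eq_integral_abs_deriv_smul MeasurableSet.univ
        (fun x _ => (hd x).hasDerivWithinAt) hmono.injective.injOn
        (fun x => φ x * Real.exp (k * G x))
      rw [hconvE]
      refine le_trans (le_of_eq ?_) (setIntegral_le_integral 
        (s := (fun x => k / m * x + (1 - k / m) * R x) '' univ) hGi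
        (ae_of_all _ fun x => (mul_pos (hφpos x) (Real.exp_pos _)).le))
      rw [this, setIntegral_univ]
      refine integral_congr_ae (ae_of_all _ fun x => ?_)
      simp only [abs_of_pos (hpos x), smul_eq_mul]
  obtain ⟨hp0, hint0, hle0⟩ := hcv m0 F0 h0 hi0
  obtain ⟨hp1, hint1, hle1⟩ := hcv m1 F1 h1 hi1
  rw [← hI0d] at hle0
  rw [← hI1d] at hle1
  set B0 := fun x => (m0 / m + (1 - m0 / m) * (q x / φ (R x))) *
        (φ (m0 / m * x + (1 - m0 / m) * R x) * Real.exp (m0 * F0 (m0 / m * x + (1 - m0 / m) * R x))) with hB0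
  set B1 := fun x => (m1 / m + (1 - m1 / m) * (q x / φ (R x))) *
        (φ (m1 / m * x + (1 - m1 / m) * R x) * Real.exp (m1 * F1 (m1 / m * x + (1 - m1 / m) * R x))) with hB1
  have hB0pos : ∀ x, 0 < B0 x := fun x => mul_pos (hp0 x) (mul_pos (hφpos _) (Real.exp_pos _))
  have hB1pos : ∀ x, 0 < B1 x := fun x => mul_pos (hp1 x) (mul_pos (hφpos _) (Real.exp_pos _))
  have hlogB0 : ∀ x, Real.log (B0 x) = m0 * F0 (m0 / m * x + (1 - m0 / m) * R x) +
      (-κ - ((m0 / m) * x + (1 - m0 / m) * R x) ^ 2 / 2)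
        + Real.log (m0 / m + (1 - m0 / m) * (q x / φ (R x))) := by
    intro x
    rw [hB0]; simp only
    rw [Real.log_mul (hp0 x).ne' (mul_pos (hφpos _) (Real.exp_pos _)).ne',
      Real.log_mul (hφpos _).ne' (Real.exp_pos _).ne', Real.log_exp, hκ]; ring
  have hlogB1 : ∀ x, Real.log (B1 x) = m1 * F1 (m1 / m * x + (1 - m1 / m) * R x) +
      (-κ - ((m1 / m) * x + (1 - m1 / m) * R x) ^ 2 / 2)
        + Real.log (m1 / m + (1 - m1 / m) * (q x / φ (R x))) := by
    intro x
    rw [hB1]; simp only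
    rw [Real.log_mul (hp1 x).ne' (mul_pos (hφpos _) (Real.exp_pos _)).ne',
      Real.log_mul (hφpos _).ne' (Real.exp_pos _).ne', Real.log_exp, hκ]; ring
  have hpt : ∀ x, Real.log Z / m ≤ w0 / m0 * (Real.log (B0 x) - Real.log (q x)) +
      w1 / m1 * (Real.log (B1 x) - Real.log (q x)) := by
    intro x
    rw [hlogB0, hlogB1]
    refine pointwise_aux (f := F x) h0 h1 hw0 hw1 hw hm hmpos (hrpos x) (hr1 x) ?_ (hlq x) ?_
    · have := hle (m0 / m * x + (1 - m0 / m) * R x) (m1 / m * x + (1 - m1 / m) * R x)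
      refine le_trans (le_of_eq ?_) this
      congr 1
      have e : w1 = 1 - w0 := by linarith
      have e' : w0 * (m0 / m) + w1 * (m1 / m) = 1 := by
        rw [← mul_div_assoc, ← mul_div_assoc, ← add_div, ← hm, div_self hmpos.ne']
      linear_combination (R x - x) * e' - R x * hw
    · rw [Real.log_div (hqpos x).ne' (hφpos _).ne', hκ]
  -- AM-GM
  set α := w0 / m0 with hα
  set β := w1 / m1 with hβ
  have hα0 : 0 ≤ α := by positivity
  have hβ0 : 0 ≤ β := by positivity
  have hσ : 0 < α + β := by
    rcases hw0.eq_or_lt with h | h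
    · have : w1 = 1 := by linarith
      have : 0 < β := by rw [hβ, this]; positivity
      linarith
    · have : 0 < α := by rw [hα]; positivity
      linarith
  set δ := Real.log Z / m - α * Real.log I0 - β * Real.log I1 with hδ
  have hpt2 : ∀ x, (α + β + δ) * q x ≤ α / I0 * B0 x + β / I1 * B1 x := by
    intro x
    have hx := hpt x
    have a0 : 1 + (Real.log (B0 x) - Real.log (q x) - Real.log I0) ≤ B0 x / (q x * I0) := by
      have hp : 0 < B0 x / (q x * I0) := div_pos (hB0pos x) (mul_pos (hqpos x) hI0)
      have := Real.log_le_sub_one_of_pos hp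
      rw [Real.log_div (hB0pos x).ne' (mul_pos (hqpos x) hI0).ne',
        Real.log_mul (hqpos x).ne' hI0.ne'] at this
      linarith
    have a1 : 1 + (Real.log (B1 x) - Real.log (q x) - Real.log I1) ≤ B1 x / (q x * I1) := by
      have hp : 0 < B1 x / (q x * I1) := div_pos (hB1pos x) (mul_pos (hqpos x) hI1)
      have := Real.log_le_sub_one_of_pos hp
      rw [Real.log_div (hB1pos x).ne' (mul_pos (hqpos x) hI1).ne',
        Real.log_mul (hqpos x).ne' hI1.ne'] at this
      linarith
    have b0 := mul_le_mul_of_nonneg_left a0 hα0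
    have b1 := mul_le_mul_of_nonneg_left a1 hβ0
    have : α + β + δ ≤ α * (B0 x / (q x * I0)) + β * (B1 x / (q x * I1)) := by
      rw [hδ]; linarith
    have := mul_le_mul_of_nonneg_right this (hqpos x).le
    refine this.trans (le_of_eq ?_)
    have := (hqpos x).ne'
    field_simp
  have hfin := integral_mono (hqi.const_mul (α + β + δ))
    ((hint0.const_mul (α / I0)).add (hint1.const_mul (β / I1))) hpt2
  simp only [Pi.add_apply] at hfin
  rw [integral_const_mul, hq1, integral_add (hint0.const_mul _) (hint1.const_mul _),
    integral_const_mul, integral_const_mul] at hfin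
  have c0 := mul_le_mul_of_nonneg_left hle0 (show 0 ≤ α / I0 by positivity)
  have c1 := mul_le_mul_of_nonneg_left hle1 (show 0 ≤ β / I1 by positivity)
  rw [div_mul_cancel₀ _ hI0.ne'] at c0
  rw [div_mul_cancel₀ _ hI1.ne'] at c1
  have hδ0 : δ ≤ 0 := by linarith
  have : 1 / m * Real.log Z = Real.log Z / m := by ring
  rw [this]
  have e0 : w0 * (1 / m0 * Real.log I0) = α * Real.log I0 := by rw [hα]; ring
  have e1 : w1 * (1 / m1 * Real.log I1) = β * Real.log I1 := by rw [hβ]; ring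
  rw [e0, e1]
  linarith

open scoped NNReal

lemma integrable_exp_abs (c : ℝ) : Integrable (fun z : ℝ => Real.exp (c * |z|)) (gaussianReal 0 1) := by
  refine ((integrable_exp_mul_gaussianReal (μ := 0) (v := 1) c).add
    (integrable_exp_mul_gaussianReal (μ := 0) (v := 1) (-c))).mono' (by fun_prop) (ae_of_all _ fun z => ?_)
  simp only [Pi.add_apply, Real.norm_eq_abs, Real.abs_exp]
  rcases abs_cases z with h | h
  · rw [h.1]; have := Real.exp_pos (-c * z); linarith
  · rw [h.1]; have := Real.exp_pos (c * z)
    have e : c * -z = -c * z := by ring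
    rw [e]; linarith

lemma integrable_exp_lip {n : ℕ} {F : (Fin n → ℝ) → ℝ} {L : ℝ≥0} (hF : LipschitzWith L F) (m : ℝ) :
    Integrable (fun z => Real.exp (m * F z)) (Measure.pi fun _ : Fin n => gaussianReal 0 1) := by
  have hp : Integrable (fun z : Fin n → ℝ => ∏ i, Real.exp (|m| * L * |z i|))
      (Measure.pi fun _ : Fin n => gaussianReal 0 1) :=
    Integrable.fintype_prod (f := fun _ z => Real.exp (|m| * L * |z|)) fun i => integrable_exp_abs _
  refine (hp.const_mul (Real.exp (|m| * |F 0|))).mono'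
    (by have := hF.continuous; fun_prop) (ae_of_all _ fun z => ?_)
  rw [Real.norm_eq_abs, Real.abs_exp, ← Real.exp_sum, ← Real.exp_add]
  apply Real.exp_le_exp.2
  have h1 : |F z - F 0| ≤ L * ‖z‖ := by
    have := hF.dist_le_mul z 0
    rwa [Real.dist_eq, dist_zero_right] at this
  have h2 : ‖z‖ ≤ ∑ i, |z i| := by
    refine (pi_norm_le_iff_of_nonneg (Finset.sum_nonneg fun i _ => abs_nonneg _)).2 fun i => ?_
    exact Finset.single_le_sum (f := fun i => |z i|) (fun i _ => abs_nonneg _) (Finset.mem_univ i)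
  have h3 : |F z| ≤ |F 0| + L * ∑ i, |z i| := by
    have := mul_le_mul_of_nonneg_left h2 L.2
    have h4 := abs_sub_abs_le_abs_sub (F z) (F 0)
    change (L:ℝ) * _ ≤ L * _ at this
    linarith
  calc m * F z ≤ |m| * |F z| := by rw [← abs_mul]; exact le_abs_self _
    _ ≤ |m| * (|F 0| + L * ∑ i, |z i|) := mul_le_mul_of_nonneg_left h3 (abs_nonneg _)
    _ = _ := by rw [← Finset.mul_sum]; ring

lemma integrable_exp_lip1 {F : ℝ → ℝ} {L : ℝ≥0} (hF : LipschitzWith L F) (m : ℝ) :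
    Integrable (fun z => Real.exp (m * F z)) (gaussianReal 0 1) := by
  refine ((integrable_exp_abs (|m| * L)).const_mul (Real.exp (|m| * |F 0|))).mono'
    (by have := hF.continuous; fun_prop) (ae_of_all _ fun z => ?_)
  rw [Real.norm_eq_abs, Real.abs_exp, ← Real.exp_add]
  apply Real.exp_le_exp.2
  have h1 : |F z - F 0| ≤ L * |z| := by
    have := hF.dist_le_mul z 0
    rwa [Real.dist_eq, dist_zero_right] at this
  have h3 : |F z| ≤ |F 0| + L * |z| := by
    have h4 := abs_sub_abs_le_abs_sub (F z) (F 0)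
    linarith
  calc m * F z ≤ |m| * |F z| := by rw [← abs_mul]; exact le_abs_self _
    _ ≤ |m| * (|F 0| + L * |z|) := mul_le_mul_of_nonneg_left h3 (abs_nonneg _)
    _ = _ := by ring

lemma dist_cons_left {n : ℕ} (z z' : ℝ) (x : Fin n → ℝ) :
    dist (Fin.cons z x : Fin (n+1) → ℝ) (Fin.cons z' x) ≤ dist z z' := by
  refine (dist_pi_le_iff dist_nonneg).2 fun i => ?_
  refine Fin.cases ?_ (fun i => ?_) i <;> simp

lemma dist_cons_right {n : ℕ} (z : ℝ) (x x' : Fin n → ℝ) :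
    dist (Fin.cons z x : Fin (n+1) → ℝ) (Fin.cons z x') ≤ dist x x' := by
  refine (dist_pi_le_iff dist_nonneg).2 fun i => ?_
  refine Fin.cases ?_ (fun i => ?_) i
  · simp
  · simpa using dist_le_pi_dist x x' i

lemma lip_slice {n : ℕ} {F : (Fin (n+1) → ℝ) → ℝ} {L : ℝ≥0} (hF : LipschitzWith L F)
    (x : Fin n → ℝ) : LipschitzWith L (fun z : ℝ => F (Fin.cons z x)) :=
  LipschitzWith.of_dist_le_mul fun z z' => (hF.dist_le_mul _ _).trans
    (mul_le_mul_of_nonneg_left (dist_cons_left z z' x) L.2)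

/-- partial integration -/
noncomputable def pint {n : ℕ} (k : ℝ) (F : (Fin (n+1) → ℝ) → ℝ) (x : Fin n → ℝ) : ℝ :=
  (1 / k) * Real.log (∫ z, Real.exp (k * F (Fin.cons z x)) ∂gaussianReal 0 1)

lemma exp_pint {n : ℕ} {k : ℝ} (hk : 0 < k) {F : (Fin (n+1) → ℝ) → ℝ} {L : ℝ≥0}
    (hF : LipschitzWith L F) (x : Fin n → ℝ) :
    Real.exp (k * pint k F x) = ∫ z, Real.exp (k * F (Fin.cons z x)) ∂gaussianReal 0 1 := by
  have := integral_exp_pos (integrable_exp_lip1 (lip_slice hF x) k)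
  rw [pint, ← mul_assoc, mul_one_div_cancel hk.ne', one_mul, Real.exp_log this]

lemma lip_pint {n : ℕ} {k : ℝ} (hk : 0 < k) {F : (Fin (n+1) → ℝ) → ℝ} {L : ℝ≥0}
    (hF : LipschitzWith L F) : LipschitzWith L (pint k F) := by
  apply LipschitzWith.of_le_add_mul
  intro x y
  have : Real.exp (k * pint k F x) ≤ Real.exp (k * (pint k F y + L * dist x y)) := by
    rw [mul_add, Real.exp_add, exp_pint hk hF, exp_pint hk hF, ← integral_mul_const]
    refine integral_mono (integrable_exp_lip1 (lip_slice hF x) k)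
      ((integrable_exp_lip1 (lip_slice hF y) k).mul_const _) fun z => ?_
    simp only
    rw [← Real.exp_add, ← mul_add]
    apply Real.exp_le_exp.2 (mul_le_mul_of_nonneg_left _ hk.le)
    have h1 := hF.dist_le_mul (Fin.cons z x) (Fin.cons z y)
    have h2 := mul_le_mul_of_nonneg_left (dist_cons_right z x y) L.2
    change (L:ℝ) * _ ≤ L * _ at h2
    rw [Real.dist_eq] at h1
    have := le_abs_self (F (Fin.cons z x) - F (Fin.cons z y))
    linarith
  exact le_of_mul_le_mul_left (Real.exp_le_exp.1 this) hk

lemma integral_pint {n : ℕ} {k : ℝ} (hk : 0 < k) {F : (Fin (n+1) → ℝ) → ℝ} {L : ℝ≥0}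
    (hF : LipschitzWith L F) :
    ∫ z, Real.exp (k * F z) ∂(Measure.pi fun _ : Fin (n+1) => gaussianReal 0 1) =
    ∫ x, Real.exp (k * pint k F x) ∂(Measure.pi fun _ : Fin n => gaussianReal 0 1) := by
  simp_rw [exp_pint hk hF]
  have hmp := (measurePreserving_piFinSuccAbove (fun _ : Fin (n+1) => gaussianReal 0 1) 0).symm
  have hi := integrable_exp_lip hF k
  rw [← hmp.integral_comp (MeasurableEquiv.measurableEmbedding _)]
  have hi2 := (hmp.integrable_comp_emb (MeasurableEquiv.measurableEmbedding _)).2 hi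
  refine (integral_prod_symm _ hi2).trans ?_
  simp [MeasurableEquiv.piFinSuccAbove, Fin.insertNthEquiv]

lemma cons_comb {n : ℕ} (a b z z' : ℝ) (x x' : Fin n → ℝ) :
    a • (Fin.cons z x : Fin (n+1) → ℝ) + b • (Fin.cons z' x' : Fin (n+1) → ℝ) =
      Fin.cons (a * z + b * z') (a • x + b • x') := by
  funext i
  refine Fin.cases ?_ (fun i => ?_) i <;> simp

lemma convex_slice {n : ℕ} {F : (Fin (n+1) → ℝ) → ℝ} (hF : ConvexOn ℝ univ F) (x : Fin n → ℝ) :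
    ConvexOn ℝ univ (fun z : ℝ => F (Fin.cons z x)) := by
  refine ⟨convex_univ, fun z _ z' _ a b ha hb hab => ?_⟩
  have := hF.2 (mem_univ (Fin.cons z x)) (mem_univ (Fin.cons z' x)) ha hb hab
  rw [cons_comb, ← add_smul, hab, one_smul] at this
  exact this

lemma pint_ineq {n : ℕ} {m0 m1 w0 w1 m : ℝ} (h0 : 0 < m0) (h1 : 0 < m1)
    (hw0 : 0 ≤ w0) (hw1 : 0 ≤ w1) (hw : w0 + w1 = 1) (hm : m = w0 * m0 + w1 * m1)
    {F F0 F1 : (Fin (n+1) → ℝ) → ℝ} {L L0 L1 : ℝ≥0} (hL : LipschitzWith L F)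
    (hL0 : LipschitzWith L0 F0) (hL1 : LipschitzWith L1 F1) (hF : ConvexOn ℝ univ F)
    (hle : ∀ x0 x1, F (w0 • x0 + w1 • x1) ≤ w0 * F0 x0 + w1 * F1 x1) (x0 x1 : Fin n → ℝ) :
    pint m F (w0 • x0 + w1 • x1) ≤ w0 * pint m0 F0 x0 + w1 * pint m1 F1 x1 := by
  refine one_dim h0 h1 hw0 hw1 hw hm (convex_slice hF _) ?_ (integrable_exp_lip1 (lip_slice hL _) _)
    (integrable_exp_lip1 (lip_slice hL0 _) _) (integrable_exp_lip1 (lip_slice hL1 _) _)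
  intro z0 z1
  have := hle (Fin.cons z0 x0) (Fin.cons z1 x1)
  rwa [cons_comb] at this

lemma n_dim {m0 m1 w0 w1 m : ℝ} (h0 : 0 < m0) (h1 : 0 < m1)
    (hw0 : 0 ≤ w0) (hw1 : 0 ≤ w1) (hw : w0 + w1 = 1) (hm : m = w0 * m0 + w1 * m1)
    (hmpos : 0 < m) (n : ℕ) :
    ∀ {F F0 F1 : (Fin n → ℝ) → ℝ} {L L0 L1 : ℝ≥0} (_ : LipschitzWith L F)
    (_ : LipschitzWith L0 F0) (_ : LipschitzWith L1 F1) (_ : ConvexOn ℝ univ F)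
    (_ : ∀ x0 x1, F (w0 • x0 + w1 • x1) ≤ w0 * F0 x0 + w1 * F1 x1),
    (1 / m) * Real.log (∫ z, Real.exp (m * F z) ∂(Measure.pi fun _ : Fin n => gaussianReal 0 1)) ≤
      w0 * ((1 / m0) * Real.log (∫ z, Real.exp (m0 * F0 z) ∂(Measure.pi fun _ : Fin n => gaussianReal 0 1))) +
      w1 * ((1 / m1) * Real.log (∫ z, Real.exp (m1 * F1 z) ∂(Measure.pi fun _ : Fin n => gaussianReal 0 1))) := by
  induction n with
  | zero =>
    intro F F0 F1 L L0 L1 _ _ _ _ hle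
    have key : ∀ (k : ℝ) (G : (Fin 0 → ℝ) → ℝ), 0 < k → (1 / k) * Real.log (∫ z, Real.exp (k * G z)
        ∂(Measure.pi fun _ : Fin 0 => gaussianReal 0 1)) = G 0 := by
      intro k G hk
      have : ∀ z : Fin 0 → ℝ, Real.exp (k * G z) = Real.exp (k * G 0) := fun z => by
        rw [Subsingleton.elim z 0]
      simp_rw [this]
      simp [hk.ne']
    rw [key _ _ hmpos, key _ _ h0, key _ _ h1]
    have := hle 0 0
    rwa [smul_zero, smul_zero, add_zero] at this
  | succ n ih =>
    intro F F0 F1 L L0 L1 hL hL0 hL1 hF hle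
    rw [integral_pint hmpos hL, integral_pint h0 hL0, integral_pint h1 hL1]
    refine ih (lip_pint hmpos hL) (lip_pint h0 hL0) (lip_pint h1 hL1) ?_
      (pint_ineq h0 h1 hw0 hw1 hw hm hL hL0 hL1 hF hle)
    refine ⟨convex_univ, fun x _ y _ a b ha hb hab => ?_⟩
    exact pint_ineq hmpos hmpos ha hb hab (by rw [← add_mul, hab, one_mul]) hL hL hL hF
      (fun x0 x1 => hF.2 (mem_univ _) (mem_univ _) ha hb hab) x y


lemma exists_trunc {Φ : ℝ → ℝ} (hs : ContDiff ℝ (⊤ : ℕ∞) Φ) (hc : ConvexOn ℝ univ Φ)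
    (hsymm : ∀ x, Φ (-x) = Φ x) (h0 : Φ 0 = 0) :
    ∃ Ψ : ℕ → ℝ → ℝ, (∀ k, ConvexOn ℝ univ (Ψ k)) ∧ (∀ k, Monotone (Ψ k)) ∧
      (∀ k : ℕ, LipschitzWith (k : ℝ≥0) (Ψ k)) ∧ (∀ k x, 0 ≤ x → Ψ k x ≤ Φ x) ∧
      ∀ x, 0 ≤ x → ∀ᶠ k in atTop, Ψ k x = Φ x := by
  have hd : Differentiable ℝ Φ := hs.differentiable (by simp)
  have hdc : Continuous (deriv Φ) := hs.continuous_deriv (by simp)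
  have hmono : Monotone (deriv Φ) := by
    have := hc.monotoneOn_deriv (fun x _ => hd x)
    exact monotoneOn_univ.1 this
  have hmin : ∀ x, Φ 0 ≤ Φ x := by
    intro x
    have := hc.2 (mem_univ x) (mem_univ (-x)) (show (0:ℝ) ≤ 1/2 by norm_num) (show (0:ℝ) ≤ 1/2 by norm_num)
      (by norm_num)
    simp only [smul_eq_mul, hsymm] at this
    have e : (1/2 : ℝ) * x + 1/2 * -x = 0 := by ring
    rw [e] at this
    linarith
  have hd0 : deriv Φ 0 = 0 := IsLocalMin.deriv_eq_zero (Eventually.of_forall hmin)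
  have hnn : ∀ x, 0 ≤ x → 0 ≤ deriv Φ x := fun x hx => hd0 ▸ hmono hx
  set f : ℕ → ℝ → ℝ := fun k s => min (max (deriv Φ s) 0) k with hf
  have hfc : ∀ k, Continuous (f k) := fun k => by rw [hf]; fun_prop
  have hfm : ∀ k, Monotone (f k) := fun k x y hxy =>
    min_le_min (max_le_max (hmono hxy) le_rfl) le_rfl
  have hf0 : ∀ k x, 0 ≤ f k x := fun k x => le_min (le_max_right _ _) (Nat.cast_nonneg k)
  have hfk : ∀ k x, f k x ≤ k := fun k x => min_le_right _ _
  have hD : ∀ k x, HasDerivAt (fun x => ∫ s in (0:ℝ)..x, f k s) (f k x) x := fun k x =>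
    intervalIntegral.integral_hasDerivAt_right ((hfc k).intervalIntegrable _ _)
      ((hfc k).stronglyMeasurableAtFilter _ _) (hfc k).continuousAt
  have hderiv : ∀ k, deriv (fun x => ∫ s in (0:ℝ)..x, f k s) = f k := fun k =>
    funext fun x => (hD k x).deriv
  have hdiff : ∀ k, Differentiable ℝ (fun x => ∫ s in (0:ℝ)..x, f k s) := fun k x =>
    (hD k x).differentiableAt
  have hΦint : ∀ x, ∫ s in (0:ℝ)..x, deriv Φ s = Φ x := by
    intro x
    rw [intervalIntegral.integral_deriv_eq_sub (fun x _ => hd x) (hdc.intervalIntegrable _ _), h0, sub_zero]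
  refine ⟨fun k x => ∫ s in (0:ℝ)..x, f k s, ?_, ?_, ?_, ?_, ?_⟩
  · intro k
    apply Monotone.convexOn_univ_of_deriv (hdiff k)
    rw [hderiv]; exact hfm k
  · intro k
    apply monotone_of_deriv_nonneg (hdiff k)
    rw [hderiv]; exact hf0 k
  · intro k
    apply lipschitzWith_of_nnnorm_deriv_le (hdiff k)
    intro x
    rw [hderiv, ← NNReal.coe_le_coe, coe_nnnorm, Real.norm_eq_abs, abs_of_nonneg (hf0 k x)]
    simpa using hfk k x
  · intro k x hx
    simp only
    rw [← hΦint x]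
    refine intervalIntegral.integral_mono_on hx ((hfc k).intervalIntegrable _ _)
      (hdc.intervalIntegrable _ _) fun s hs => ?_
    rw [hf]; simp only
    rw [max_eq_left (hnn s hs.1)]; exact min_le_left _ _
  · intro x hx
    filter_upwards [eventually_ge_atTop ⌈deriv Φ x⌉₊] with k hk
    rw [← hΦint x]
    refine intervalIntegral.integral_congr fun s hs => ?_
    rw [uIcc_of_le hx] at hs
    rw [hf]; simp only
    rw [max_eq_left (hnn s hs.1), min_eq_left]
    exact (hmono hs.2).trans ((Nat.le_ceil _).trans (by exact_mod_cast hk))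

lemma sqrt_eq_norm {n : ℕ} (h z : Fin n → ℝ) :
    Real.sqrt (∑ i, (h i + z i) ^ 2) = ‖WithLp.toLp 2 (h + z)‖ := by
  rw [EuclideanSpace.norm_eq]; simp

end ParisiAux

open ParisiAux Filter Topology in
/-- Corollary 2: for `η = Φ(|h⃗ + z⃗|)` with `z⃗` an
`n`-dimensional standard Gaussian vector, `m ↦ (1/m) log E[exp (m η)]` is
convex on `(0, ∞)`. -/
theorem parisi_one_level_convex_multidim
    (n : ℕ) (Φ : ℝ → ℝ) (hΦsmooth : ContDiff ℝ (⊤ : ℕ∞) Φ)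
    (hΦconv : ConvexOn ℝ Set.univ Φ)
    (hΦsymm : ∀ x, Φ (-x) = Φ x) (hΦ0 : Φ 0 = 0)
    (h : Fin n → ℝ)
    (hint : ∀ m : ℝ, 0 < m →
      Integrable
        (fun z : Fin n → ℝ =>
          Real.exp (m * Φ (Real.sqrt (∑ i, (h i + z i) ^ 2))))
        (Measure.pi fun _ : Fin n => gaussianReal 0 1)) :
    ConvexOn ℝ (Set.Ioi (0 : ℝ))
      (fun m => (1 / m) *
        Real.log (∫ z : Fin n → ℝ,
          Real.exp (m * Φ (Real.sqrt (∑ i, (h i + z i) ^ 2)))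
            ∂(Measure.pi fun _ : Fin n => gaussianReal 0 1))) := by
  obtain ⟨Ψ, hΨc, hΨm, hΨL, hΨle, hΨeq⟩ := exists_trunc hΦsmooth hΦconv hΦsymm hΦ0
  set N : (Fin n → ℝ) → ℝ := fun z => Real.sqrt (∑ i, (h i + z i) ^ 2) with hN
  have hN0 : ∀ z, 0 ≤ N z := fun z => Real.sqrt_nonneg _
  have hNc : Continuous N := by rw [hN]; fun_prop
  obtain ⟨K, hNL⟩ : ∃ K, LipschitzWith K N := by
    have h1 : LipschitzWith 1 (fun z : Fin n → ℝ => h + z) :=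
      LipschitzWith.of_dist_le_mul fun x y => by simp
    have h2 := lipschitzWith_one_norm.comp
      ((PiLp.lipschitzWith_toLp 2 (fun _ : Fin n => ℝ)).comp h1)
    have e : N = norm ∘ (WithLp.toLp 2) ∘ (fun z : Fin n → ℝ => h + z) :=
      funext fun z => sqrt_eq_norm h z
    rw [e]; exact ⟨_, h2⟩
  have hNconv : ∀ (x y : Fin n → ℝ) (a b : ℝ), 0 ≤ a → 0 ≤ b → a + b = 1 →
      N (a • x + b • y) ≤ a * N x + b * N y := by
    intro x y a b ha hb hab
    simp only [hN, sqrt_eq_norm]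
    have e : WithLp.toLp 2 (h + (a • x + b • y)) =
        a • WithLp.toLp 2 (h + x) + b • WithLp.toLp 2 (h + y) := by
      rw [← WithLp.toLp_smul, ← WithLp.toLp_smul, ← WithLp.toLp_add]
      congr 1
      rw [smul_add, smul_add]
      have : h = a • h + b • h := by rw [← add_smul, hab, one_smul]
      nth_rewrite 1 [this]
      abel
    rw [e]
    refine (norm_add_le _ _).trans (le_of_eq ?_)
    rw [norm_smul, norm_smul, Real.norm_eq_abs, Real.norm_eq_abs, abs_of_nonneg ha, abs_of_nonneg hb]
  have hFc : ∀ k, ConvexOn ℝ Set.univ (fun z => Ψ k (N z)) := by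
    intro k
    refine ⟨convex_univ, fun x _ y _ a b ha hb hab => ?_⟩
    exact (hΨm k (hNconv x y a b ha hb hab)).trans
      ((hΨc k).2 (Set.mem_univ _) (Set.mem_univ _) ha hb hab)
  have hFL : ∀ k : ℕ, LipschitzWith ((k : NNReal) * K) (fun z => Ψ k (N z)) := fun k => (hΨL k).comp hNL
  have hlim : ∀ m : ℝ, 0 < m → Tendsto (fun k => (1 / m) * Real.log (∫ z : Fin n → ℝ,
      Real.exp (m * Ψ k (N z)) ∂(Measure.pi fun _ : Fin n => gaussianReal 0 1))) atTop
      (𝓝 ((1 / m) * Real.log (∫ z : Fin n → ℝ,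
      Real.exp (m * Φ (N z)) ∂(Measure.pi fun _ : Fin n => gaussianReal 0 1)))) := by
    intro m hm
    refine Tendsto.const_mul _ (Tendsto.log ?_ (integral_exp_pos (hint m hm)).ne')
    refine tendsto_integral_of_dominated_convergence _
      (fun k => (integrable_exp_lip (hFL k) m).aestronglyMeasurable) (hint m hm) ?_ ?_
    · intro k
      refine ae_of_all _ fun z => ?_
      rw [Real.norm_eq_abs, Real.abs_exp]
      exact Real.exp_le_exp.2 (mul_le_mul_of_nonneg_left (hΨle k _ (hN0 z)) hm.le)
    · refine ae_of_all _ fun z => tendsto_const_nhds.congr' ?_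
      filter_upwards [hΨeq (N z) (hN0 z)] with k hk
      rw [hk]
  refine ⟨convex_Ioi 0, fun m0 h0 m1 h1 a b ha hb hab => ?_⟩
  have hmpos : 0 < a • m0 + b • m1 := (convex_Ioi (0:ℝ)) h0 h1 ha hb hab
  refine le_of_tendsto_of_tendsto' (hlim _ hmpos)
    (((hlim m0 h0).const_mul a).add ((hlim m1 h1).const_mul b)) fun k => ?_
  exact n_dim h0 h1 ha hb hab rfl hmpos n (hFL k) (hFL k) (hFL k) (hFc k)
    (fun x0 x1 => (hFc k).2 (Set.mem_univ _) (Set.mem_univ _) ha hb hab)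
end
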